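/- arXiv:math/0612070 — 3 statements merged into one kernel-verified Lean document; each statement's English description precedes it below -/
import Mathlib

section
/- Let A be an n×n matrix with unit operator norm, let m divide n with n = km, and let P be a diagonal projector onto a uniformly random subset of exactly k coordinates of {1,...,n}. If for some p ≥ log n the moment bound (E ‖P A P‖^p)^{1/p} ≤ ε holds, then there exists a partition of {1,...,n} into m blocks σ_1,...,σ_m, each of size k, such that ‖Σ_{j=1}^m P_{σ_j} A P_{σ_j}‖ ≤ 3ε, where P_{σ_j} is the diagonal projector onto the coordinates in σ_j. -/
/-!
The proof is a first-moment argument. Fix one partition `τ₁, …, τₘ` of the coordinates into blocks of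
size `k` and apply a uniformly random permutation `π` to it. Each block `π(τⱼ)` is a uniformly random
`k`-subset, so the expectation of `∑ⱼ ‖P_{π(τⱼ)} A P_{π(τⱼ)}‖ ^ p` is `m` times the given moment, hence
at most `m εᵖ`. Some `π` therefore satisfies `maxⱼ ‖P_{π(τⱼ)} A P_{π(τⱼ)}‖ ^ p ≤ m εᵖ ≤ (e ε)ᵖ`, because
`m ≤ n ≤ eᵖ`; and `e < 3`. Since the blocks are disjoint, the norm of the block-diagonal sum is at most
the maximum of the block norms (`specNorm_blocks_le`).

Uniformity of `π(τ)` is `sum_perm_image`. It needs no count of stabilizers: `∑_π F(π(τ))` depends only on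
the size of `τ`, so it may be averaged over all `τ` of that size.

When `p = 0` the exponent `1 / p` is `0` and the moment hypothesis degenerates to `1 ≤ ε`; then `n = 1`
and the claim is trivial.
-/

open scoped BigOperators

/-- Spectral norm: operator norm of a matrix as a map `ℓ₂ⁿ → ℓ₂ᵐ`. -/
noncomputable def specNorm {m n : ℕ} (A : Matrix (Fin m) (Fin n) ℂ) : ℝ :=
  ‖LinearMap.toContinuousLinearMap (Matrix.toEuclideanLin A)‖

/-- Maximum Euclidean column norm, i.e. the `ℓ₁ → ℓ₂` operator norm. -/
noncomputable def colNorm {m n : ℕ} (A : Matrix (Fin m) (Fin n) ℂ) : ℝ :=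
  ⨆ j, Real.sqrt (∑ i, ‖A i j‖ ^ 2)

/-- The diagonal 0–1 projector onto the coordinates in `s`. -/
def projOf {n : ℕ} (s : Finset (Fin n)) : Matrix (Fin n) (Fin n) ℂ :=
  Matrix.diagonal fun i => if i ∈ s then 1 else 0

/-- Diagonal 0–1 matrix determined by a boolean vector. -/
def bernM {n : ℕ} (f : Fin n → Bool) : Matrix (Fin n) (Fin n) ℂ :=
  Matrix.diagonal fun i => if f i then 1 else 0

/-- Probability weight of the outcome `f` for i.i.d. Bernoulli(ρ) selectors. -/
noncomputable def bw {n : ℕ} (ρ : ℝ) (f : Fin n → Bool) : ℝ :=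
  ∏ i, if f i then ρ else 1 - ρ

lemma exists_perm_image {n : ℕ} {s t : Finset (Fin n)} (h : s.card = t.card) :
    ∃ g : Equiv.Perm (Fin n), s.image g = t := by
  let e : {x // x ∈ s} ≃ {x // x ∈ t} := Finset.equivOfCardEq h
  refine ⟨e.extendSubtype, Finset.eq_of_subset_of_card_le ?_ ?_⟩
  · intro y hy
    obtain ⟨x, hx, rfl⟩ := Finset.mem_image.1 hy
    exact e.extendSubtype_mem x hx
  · rw [Finset.card_image_of_injective _ (Equiv.injective _), h]

/-- The image of a `k`-set under a uniformly random permutation is a uniformly random `k`-set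
(with the denominators cleared). -/
lemma sum_perm_image {n k : ℕ} (F : Finset (Fin n) → ℝ) (τ : Finset (Fin n)) (hτ : τ.card = k) :
    (n.choose k : ℝ) * ∑ g : Equiv.Perm (Fin n), F (τ.image g) =
      (Fintype.card (Equiv.Perm (Fin n)) : ℝ) *
        ∑ s ∈ Finset.univ.filter (fun s : Finset (Fin n) => s.card = k), F s := by
  set K := Finset.univ.filter (fun s : Finset (Fin n) => s.card = k) with hK
  have hcard : K.card = n.choose k := by
    have : K = Finset.powersetCard k Finset.univ := by
      ext s; simp [hK, Finset.mem_powersetCard]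
    rw [this, Finset.card_powersetCard, Finset.card_univ, Fintype.card_fin]
  have h1 : ∀ s ∈ K, ∑ g : Equiv.Perm (Fin n), F (s.image g)
      = ∑ g : Equiv.Perm (Fin n), F (τ.image g) := by
    intro s hs
    obtain ⟨h, rfl⟩ := exists_perm_image (s := τ) (t := s)
      (hτ.trans (Finset.mem_filter.1 hs).2.symm)
    refine Fintype.sum_equiv (Equiv.mulRight h) _ _ fun g => ?_
    rw [Finset.image_image]
    rfl
  have h2 : ∀ g : Equiv.Perm (Fin n), ∑ s ∈ K, F (s.image g) = ∑ s ∈ K, F s := by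
    intro g
    refine Finset.sum_bij' (fun s _ => s.image g) (fun s _ => s.image g.symm) ?_ ?_ ?_ ?_ ?_
    · intro s hs
      simpa [hK, Finset.card_image_of_injective _ g.injective] using hs
    · intro s hs
      simpa [hK, Finset.card_image_of_injective _ g.symm.injective] using hs
    · intro s _
      simp [Finset.image_image]
    · intro s _
      simp [Finset.image_image]
    · intro s _
      rfl
  calc (n.choose k : ℝ) * ∑ g : Equiv.Perm (Fin n), F (τ.image g)
      = ∑ s ∈ K, ∑ g : Equiv.Perm (Fin n), F (s.image g) := by
        rw [Finset.sum_congr rfl h1, Finset.sum_const, hcard, nsmul_eq_mul]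
    _ = ∑ g : Equiv.Perm (Fin n), ∑ s ∈ K, F (s.image g) := Finset.sum_comm
    _ = _ := by
        rw [Finset.sum_congr rfl fun g _ => h2 g, Finset.sum_const, nsmul_eq_mul,
          Finset.card_univ]

lemma specNorm_nonneg {m n : ℕ} (A : Matrix (Fin m) (Fin n) ℂ) : 0 ≤ specNorm A := norm_nonneg _

lemma norm_toEuclideanLin_le {m n : ℕ} (A : Matrix (Fin m) (Fin n) ℂ)
    (x : EuclideanSpace ℂ (Fin n)) : ‖Matrix.toEuclideanLin A x‖ ≤ specNorm A * ‖x‖ :=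
  (LinearMap.toContinuousLinearMap (Matrix.toEuclideanLin A)).le_opNorm x

/-- A block-diagonal matrix is bounded in norm by any common bound for its blocks. -/
lemma specNorm_blocks_le {n m : ℕ} (A : Matrix (Fin n) (Fin n) ℂ) (σ : Fin m → Finset (Fin n))
    (hd : Pairwise fun i j => Disjoint (σ i) (σ j))
    (hu : Finset.univ.biUnion σ = Finset.univ) (M : ℝ) (hM : 0 ≤ M)
    (h : ∀ j, specNorm (projOf (σ j) * A * projOf (σ j)) ≤ M) :
    specNorm (∑ j, projOf (σ j) * A * projOf (σ j)) ≤ M := by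
  have hsum : ∀ f : Fin n → ℝ, ∑ i, f i = ∑ j, ∑ i ∈ σ j, f i := by
    intro f
    rw [← hu, Finset.sum_biUnion]
    exact fun i _ j _ hij => hd hij
  refine ContinuousLinearMap.opNorm_le_bound _ hM fun x => ?_
  rw [LinearMap.coe_toContinuousLinearMap']
  refine le_of_sq_le_sq ?_ (by positivity)
  rw [mul_pow, EuclideanSpace.norm_sq_eq, EuclideanSpace.norm_sq_eq x, hsum, hsum,
    Finset.mul_sum]
  refine Finset.sum_le_sum fun j _ => ?_
  let y : EuclideanSpace ℂ (Fin n) := WithLp.toLp 2 ((projOf (σ j)).mulVec x.ofLp)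
  have hy : ‖y‖ ^ 2 = ∑ i ∈ σ j, ‖x i‖ ^ 2 := by
    rw [EuclideanSpace.norm_sq_eq, ← Finset.sum_subset (Finset.subset_univ (σ j))]
    · refine Finset.sum_congr rfl fun i hi => ?_
      simp [y, projOf, Matrix.mulVec_diagonal, hi]
    · intro i _ hi
      simp [y, projOf, Matrix.mulVec_diagonal, hi]
  rw [← hy]
  -- On the coordinates in `σ j` only the `j`-th summand contributes, and it sees only `P_{σ j} x`.
  have hb : ∀ i ∈ σ j, Matrix.toEuclideanLin (∑ l, projOf (σ l) * A * projOf (σ l)) x i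
      = Matrix.toEuclideanLin (projOf (σ j) * A * projOf (σ j)) y i := by
    intro i hi
    have hidem : projOf (σ j) * projOf (σ j) = projOf (σ j) := by
      simp [projOf, Matrix.diagonal_mul_diagonal]
    simp only [Matrix.toLpLin_apply, y, Matrix.mulVec_mulVec, mul_assoc, hidem]
    rw [Matrix.sum_mulVec, Finset.sum_apply, Finset.sum_eq_single j]
    · intro l _ hl
      have : i ∉ σ l := fun hil => Finset.disjoint_left.1 (hd hl) hil hi
      rw [← Matrix.mulVec_mulVec]
      simp [projOf, Matrix.mulVec_diagonal, this]
    · simp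
  calc _ = ∑ i ∈ σ j, ‖Matrix.toEuclideanLin (projOf (σ j) * A * projOf (σ j)) y i‖ ^ 2 :=
        Finset.sum_congr rfl fun i hi => by rw [hb i hi]
    _ ≤ ∑ i, ‖Matrix.toEuclideanLin (projOf (σ j) * A * projOf (σ j)) y i‖ ^ 2 :=
        Finset.sum_le_sum_of_subset_of_nonneg (Finset.subset_univ _) fun _ _ _ => by positivity
    _ = ‖Matrix.toEuclideanLin (projOf (σ j) * A * projOf (σ j)) y‖ ^ 2 :=
        (EuclideanSpace.norm_sq_eq _).symm
    _ ≤ (M * ‖y‖) ^ 2 := by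
        gcongr
        exact (norm_toEuclideanLin_le _ y).trans (by gcongr; exact h j)
    _ = _ := mul_pow _ _ _

lemma exists_partition (n k m : ℕ) (hn : n = k * m) :
    ∃ τ : Fin m → Finset (Fin n), (∀ j, (τ j).card = k) ∧
      (Pairwise fun i j => Disjoint (τ i) (τ j)) ∧ Finset.univ.biUnion τ = Finset.univ := by
  let e : Fin k × Fin m ≃ Fin n := finProdFinEquiv.trans (finCongr hn.symm)
  refine ⟨fun j => Finset.univ.image fun i => e (i, j), ?_, ?_, ?_⟩
  · intro j
    rw [Finset.card_image_of_injective, Finset.card_univ, Fintype.card_fin]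
    intro a b hab
    simpa using hab
  · intro i j hij
    simp only [Finset.disjoint_left, Finset.mem_image, Finset.mem_univ, true_and]
    rintro _ ⟨a, rfl⟩ ⟨b, hb⟩
    exact hij (Prod.ext_iff.1 (e.injective hb)).2.symm
  · ext x
    simp only [Finset.mem_biUnion, Finset.mem_image, Finset.mem_univ, true_and, iff_true]
    exact ⟨(e.symm x).2, (e.symm x).1, by simp⟩

/-- Some partition into blocks of size `k` has a total at most its expectation, namely `m` times the
average of `F` over the `k`-sets. -/
lemma exists_good_partition (n k m : ℕ) (hm : 0 < m) (hn : n = k * m)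
    (F : Finset (Fin n) → ℝ) :
    ∃ σ : Fin m → Finset (Fin n), (∀ j, (σ j).card = k) ∧
      (Pairwise fun i j => Disjoint (σ i) (σ j)) ∧ Finset.univ.biUnion σ = Finset.univ ∧
      ∑ j, F (σ j) ≤ m * ((∑ s ∈ Finset.univ.filter (fun s : Finset (Fin n) => s.card = k), F s)
        / (n.choose k : ℝ)) := by
  obtain ⟨τ, h1, h2, h3⟩ := exists_partition n k m hn
  set S := ∑ s ∈ Finset.univ.filter (fun s : Finset (Fin n) => s.card = k), F s
  have hC : (0 : ℝ) < n.choose k := by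
    exact_mod_cast Nat.choose_pos (hn ▸ Nat.le_mul_of_pos_right k hm)
  have htot : ∑ g : Equiv.Perm (Fin n), ∑ j, F ((τ j).image g)
      = ∑ _g : Equiv.Perm (Fin n), m * (S / (n.choose k : ℝ)) := by
    rw [Finset.sum_comm, Finset.sum_const, nsmul_eq_mul, Finset.card_univ]
    have : ∀ j, ∑ g : Equiv.Perm (Fin n), F ((τ j).image g)
        = (Fintype.card (Equiv.Perm (Fin n)) : ℝ) * (S / (n.choose k : ℝ)) := by
      intro j
      have := sum_perm_image F (τ j) (h1 j)
      field_simp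
      linarith
    rw [Finset.sum_congr rfl fun j _ => this j, Finset.sum_const, nsmul_eq_mul,
      Finset.card_univ, Fintype.card_fin]
    ring
  obtain ⟨g, -, hg⟩ := Finset.exists_le_of_sum_le Finset.univ_nonempty htot.le
  refine ⟨fun j => (τ j).image g, ?_, ?_, ?_, hg⟩
  · intro j
    rw [Finset.card_image_of_injective _ g.injective, h1]
  · intro i j hij
    exact (Finset.disjoint_image g.injective).2 (h2 hij)
  · rw [← Finset.biUnion_image, h3, Finset.image_univ_equiv]

/-- Random Paving Principle. -/
theorem random_paving_principle (n k m : ℕ) (hm : 0 < m) (hn : n = k * m)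
    (A : Matrix (Fin n) (Fin n) ℂ) (hA : specNorm A = 1)
    (p ε : ℝ) (hp : Real.log n ≤ p) (hε : 0 ≤ ε)
    (hmom : ((∑ s ∈ Finset.univ.filter (fun s : Finset (Fin n) => s.card = k),
        specNorm (projOf s * A * projOf s) ^ p) / (n.choose k : ℝ)) ^ (1/p) ≤ ε) :
    ∃ σ : Fin m → Finset (Fin n),
      (∀ j, (σ j).card = k) ∧
      (Pairwise fun i j => Disjoint (σ i) (σ j)) ∧
      Finset.univ.biUnion σ = Finset.univ ∧
      specNorm (∑ j, projOf (σ j) * A * projOf (σ j)) ≤ 3 * ε := by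
  have hn0 : 0 < n := by
    rcases Nat.eq_zero_or_pos n with h0 | h0
    · exfalso
      subst h0
      rw [Subsingleton.elim A 0] at hA
      simp [specNorm] at hA
    · exact h0
  have hmn : m ≤ n := by
    have : 0 < k := Nat.pos_of_ne_zero (by rintro rfl; simp at hn; omega)
    rw [hn]; exact Nat.le_mul_of_pos_left m this
  have hnR : (1 : ℝ) ≤ n := by exact_mod_cast hn0
  have hp0 : 0 ≤ p := (Real.log_nonneg hnR).trans hp
  obtain ⟨σ, h1, h2, h3, h4⟩ := exists_good_partition n k m hm hn
    (fun s => specNorm (projOf s * A * projOf s) ^ p)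
  refine ⟨σ, h1, h2, h3, specNorm_blocks_le A σ h2 h3 _ (by positivity) fun j => ?_⟩
  rcases hp0.eq_or_lt with rfl | hp0
  · have hε1 : 1 ≤ ε := by simpa using hmom
    have hn1 : n = 1 := by
      have := (Real.log_nonpos_iff (by linarith : (0 : ℝ) ≤ n)).1 hp
      have : n ≤ 1 := by exact_mod_cast this
      omega
    have hk : k = n := by
      have : k = 1 := Nat.eq_one_of_mul_eq_one_right (hn.symm.trans hn1)
      omega
    have hσ : σ j = Finset.univ := by
      rw [← Finset.card_eq_iff_eq_univ, h1, Fintype.card_fin, hk]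
    have : projOf (σ j) = 1 := by
      rw [hσ]; simp [projOf]
    rw [this, one_mul, mul_one, hA]
    linarith only [hε1]
  · have hS0 : 0 ≤ (∑ s ∈ Finset.univ.filter (fun s : Finset (Fin n) => s.card = k),
        specNorm (projOf s * A * projOf s) ^ p) / (n.choose k : ℝ) := by
      refine div_nonneg (Finset.sum_nonneg fun s _ => ?_) (Nat.cast_nonneg _)
      exact Real.rpow_nonneg (specNorm_nonneg _) _
    generalize (∑ s ∈ Finset.univ.filter (fun s : Finset (Fin n) => s.card = k),
        specNorm (projOf s * A * projOf s) ^ p) / (n.choose k : ℝ) = S at hmom h4 hS0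
    have hS : S ≤ ε ^ p := (Real.rpow_inv_le_iff_of_pos hS0 hε hp0).1 (one_div p ▸ hmom)
    have hj : specNorm (projOf (σ j) * A * projOf (σ j)) ^ p
        ≤ ∑ j, specNorm (projOf (σ j) * A * projOf (σ j)) ^ p :=
      Finset.single_le_sum (f := fun j => specNorm (projOf (σ j) * A * projOf (σ j)) ^ p)
        (fun j _ => Real.rpow_nonneg (specNorm_nonneg _) _) (Finset.mem_univ j)
    have hme : (m : ℝ) ≤ Real.exp 1 ^ p := by
      rw [← Real.exp_mul, one_mul]
      calc (m : ℝ) ≤ n := by exact_mod_cast hmn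
        _ = Real.exp (Real.log n) := (Real.exp_log (by linarith)).symm
        _ ≤ Real.exp p := Real.exp_le_exp.2 hp
    have hfin : specNorm (projOf (σ j) * A * projOf (σ j)) ^ p ≤ (Real.exp 1 * ε) ^ p := by
      rw [Real.mul_rpow (Real.exp_pos 1).le hε]
      exact (hj.trans h4).trans (mul_le_mul hme hS hS0 (by positivity))
    have := (Real.rpow_le_rpow_iff (specNorm_nonneg _) (by positivity) hp0).1 hfin
    have he : Real.exp 1 ≤ 3 := by linarith [Real.exp_one_lt_d9]
    exact this.trans (by gcongr)
end

section
/- Let x_1,...,x_n ∈ ℂ^d (or ℝ^d) be the columns of a matrix X, and let ε_1,...,ε_n be independent Rademacher random variables. For any p ≥ 2 log n with n ≥ 2, one has (E ‖Σ_{j=1}^n ε_j x_j x_j^*‖^p)^{1/p} ≤ 1.5 √p · ‖X‖_{1→2} · ‖X‖, where ‖X‖_{1→2} = max_j ‖x_j‖_2 is the maximum Euclidean column norm and ‖X‖ is the spectral norm. -/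
/-!
Rudelson's lemma follows from moment bounds at even exponents, where no general noncommutative
Khintchine inequality is needed.

Let `H = ∑ⱼ εⱼ xⱼ xⱼ*`, `M = ‖X‖_{1→2}` and `S = ‖X‖`. Writing
`tr H^(2m+2) = ∑ⱼ εⱼ xⱼ* H^(2m+1) xⱼ` and averaging each summand with its value after the reversal
of `εⱼ` (discrete integration by parts) leaves the increments of `xⱼ* H^(2m+1) xⱼ` under the
rank-one perturbation `2 εⱼ xⱼ xⱼ*`. With `H'` the perturbed matrix, telescoping turns such an
increment into `2 ∑_q (xⱼ* H^q xⱼ)(xⱼ* H'^(2m-q) xⱼ)`, and the spectral theorem together with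
`∑_q a^q b^(2m-q) ≤ (2m+1)/2 (a^(2m) + b^(2m))` bounds it (`quadForm_increment_le`). The outcome is
`E tr H^(2m+2) ≤ (2m+1) M² E ‖H^m X‖_F² ≤ (2m+1) M² S² E tr H^(2m)` (the last step for `m ≥ 1`),
and `‖X‖_F² ≤ n S²` starts the recursion, so that
`E ‖H‖^(2m) ≤ E tr H^(2m) ≤ (2m-1)‼ n (M S)^(2m)` (`sum_norm_pow_le`).

Jensen's inequality transfers this to real `p ≤ 2m`. With `n ≤ exp (p / 2)` and a suitable
even integer `2m ≥ p`, the elementary bound `(2m-1)‼ n ≤ (2.25 p)^m` (`exists_even_exponent`)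
produces the constant `1.5 √p`.
-/

open scoped BigOperators

open scoped Matrix Matrix.Norms.L2Operator

/-- The squared Frobenius norm `∑ |A i j|²`. -/
noncomputable def frobSq {m n : ℕ} (A : Matrix (Fin m) (Fin n) ℂ) : ℝ :=
  ∑ j, ∑ i, ‖A i j‖ ^ 2

/-- The quadratic form `Re (x* A x)`. -/
noncomputable def quadForm {d : ℕ} (x : Fin d → ℂ) (A : Matrix (Fin d) (Fin d) ℂ) : ℝ :=
  (star x ⬝ᵥ (A *ᵥ x)).re

/-- The sign `±1` encoded by a boolean. -/
def boolSign (b : Bool) : ℝ := if b then 1 else -1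

/-- The signed sum `∑ⱼ εⱼ xⱼ xⱼ*` of rank-one matrices built from the columns `xⱼ` of `X`. -/
noncomputable def radSum {d n : ℕ} (X : Matrix (Fin d) (Fin n) ℂ) (ε : Fin n → Bool) :
    Matrix (Fin d) (Fin d) ℂ :=
  ∑ j, boolSign (ε j) • Matrix.vecMulVec (X.col j) (star (X.col j))

/-! ### Frobenius and operator norms -/

lemma norm_mulVec_sq_le {m n : ℕ} (A : Matrix (Fin m) (Fin n) ℂ) (x : Fin n → ℂ) :
    ∑ i, ‖(A *ᵥ x) i‖ ^ 2 ≤ ‖A‖ ^ 2 * ∑ i, ‖x i‖ ^ 2 := by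
  have h := Matrix.l2_opNorm_mulVec A (WithLp.toLp 2 x)
  have h2 := pow_le_pow_left₀ (norm_nonneg _) h 2
  rw [mul_pow, EuclideanSpace.norm_sq_eq, EuclideanSpace.norm_sq_eq] at h2
  exact h2

lemma frobSq_nonneg {m n : ℕ} (A : Matrix (Fin m) (Fin n) ℂ) : 0 ≤ frobSq A := by
  unfold frobSq; positivity

lemma frobSq_mul_le {l m n : ℕ} (A : Matrix (Fin l) (Fin m) ℂ) (B : Matrix (Fin m) (Fin n) ℂ) :
    frobSq (A * B) ≤ ‖A‖ ^ 2 * frobSq B := by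
  unfold frobSq
  rw [Finset.mul_sum]
  refine Finset.sum_le_sum fun j _ => ?_
  exact norm_mulVec_sq_le A (fun i => B i j)

lemma frobSq_conjTranspose {m n : ℕ} (A : Matrix (Fin m) (Fin n) ℂ) :
    frobSq Aᴴ = frobSq A := by
  unfold frobSq
  rw [Finset.sum_comm]
  simp [Matrix.conjTranspose_apply]

lemma frobSq_mul_le' {l m n : ℕ} (A : Matrix (Fin l) (Fin m) ℂ) (B : Matrix (Fin m) (Fin n) ℂ) :
    frobSq (A * B) ≤ ‖B‖ ^ 2 * frobSq A := by
  rw [← frobSq_conjTranspose, Matrix.conjTranspose_mul, ← frobSq_conjTranspose A,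
    ← Matrix.l2_opNorm_conjTranspose B]
  exact frobSq_mul_le _ _

lemma opNorm_sq_le_frobSq {m n : ℕ} (A : Matrix (Fin m) (Fin n) ℂ) : ‖A‖ ^ 2 ≤ frobSq A := by
  have h : ‖A‖ ≤ √(frobSq A) := by
    refine ContinuousLinearMap.opNorm_le_bound
      (LinearMap.toContinuousLinearMap (Matrix.toEuclideanLin A)) (Real.sqrt_nonneg _) fun x => ?_
    change ‖WithLp.toLp 2 (A *ᵥ x.ofLp)‖ ≤ _
    refine le_of_sq_le_sq ?_ (by positivity)
    rw [mul_pow, Real.sq_sqrt (frobSq_nonneg A), EuclideanSpace.norm_sq_eq,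
      EuclideanSpace.norm_sq_eq]
    unfold frobSq
    rw [Finset.sum_comm, Finset.sum_mul]
    refine Finset.sum_le_sum fun i _ => ?_
    have h1 : ‖(A *ᵥ x.ofLp) i‖ ≤ ∑ j, ‖A i j‖ * ‖x j‖ := by
      simp_rw [← norm_mul]
      exact norm_sum_le Finset.univ fun j => A i j * x j
    exact (pow_le_pow_left₀ (norm_nonneg _) h1 2).trans
      (Finset.sum_mul_sq_le_sq_mul_sq _ _ _)
  calc ‖A‖ ^ 2 ≤ √(frobSq A) ^ 2 := pow_le_pow_left₀ (norm_nonneg _) h 2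
    _ = _ := Real.sq_sqrt (frobSq_nonneg A)

/-- The C*-identity makes the norm multiplicative on powers of a self-adjoint matrix; only the
nontrivial inequality is recorded. -/
lemma norm_pow_le_of_isHermitian {d : ℕ} {A : Matrix (Fin d) (Fin d) ℂ} (hA : A.IsHermitian)
    (m : ℕ) (hm : 0 < m) : ‖A‖ ^ m ≤ ‖A ^ m‖ := by
  rcases (norm_nonneg A).eq_or_lt with h0 | h0
  · rw [← h0, zero_pow hm.ne']; exact norm_nonneg _
  have hlt : m < 2 ^ m := Nat.lt_two_pow_self
  have h1 : ‖A ^ (2 ^ m)‖ = ‖A‖ ^ (2 ^ m) := IsSelfAdjoint.norm_pow_two_pow hA m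
  have h2 : ‖A‖ ^ (2 ^ m) ≤ ‖A ^ m‖ * ‖A‖ ^ (2 ^ m - m) := by
    rw [← h1]
    conv_lhs => rw [← Nat.add_sub_of_le hlt.le, pow_add]
    exact (norm_mul_le _ _).trans
      (mul_le_mul_of_nonneg_left (norm_pow_le' _ (by omega)) (norm_nonneg _))
  have h3 : ‖A‖ ^ (2 ^ m) = ‖A‖ ^ m * ‖A‖ ^ (2 ^ m - m) := by
    rw [← pow_add, Nat.add_sub_of_le hlt.le]
  rw [h3] at h2
  exact le_of_mul_le_mul_right h2 (by positivity)

/-! ### Increments of powers under rank-one perturbations -/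

/-- Spectral decomposition: the moments `x* A^q x` are the moments of a finite positive measure
on the spectrum of `A`. -/
lemma exists_spectral_weights {d : ℕ} {A : Matrix (Fin d) (Fin d) ℂ} (hA : A.IsHermitian)
    (x : Fin d → ℂ) : ∃ (l w : Fin d → ℝ), (∀ i, 0 ≤ w i) ∧
      ∀ q : ℕ, star x ⬝ᵥ ((A ^ q) *ᵥ x) = ((∑ i, l i ^ q * w i : ℝ) : ℂ) := by
  set U := hA.eigenvectorUnitary with hU
  set y : Fin d → ℂ := (star (U : Matrix (Fin d) (Fin d) ℂ)) *ᵥ x with hy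
  refine ⟨hA.eigenvalues, fun i => ‖y i‖ ^ 2, fun i => by positivity, fun q => ?_⟩
  have h1 : A ^ q = (U : Matrix (Fin d) (Fin d) ℂ) *
      Matrix.diagonal (fun i => ((hA.eigenvalues i : ℝ) : ℂ) ^ q) *
      star (U : Matrix (Fin d) (Fin d) ℂ) := by
    conv_lhs => rw [hA.spectral_theorem]
    rw [← map_pow, Unitary.conjStarAlgAut_apply, Matrix.diagonal_pow]
    rfl
  have h2 : star x ᵥ* (U : Matrix (Fin d) (Fin d) ℂ) = star y := by
    rw [hy, Matrix.star_mulVec, Matrix.star_eq_conjTranspose, Matrix.conjTranspose_conjTranspose]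
  rw [h1, ← Matrix.mulVec_mulVec, ← hy, ← Matrix.mulVec_mulVec, Matrix.dotProduct_mulVec, h2]
  push_cast
  simp only [dotProduct, Matrix.mulVec_diagonal, Pi.star_apply]
  refine Finset.sum_congr rfl fun i _ => ?_
  rw [← Complex.conj_mul', mul_left_comm]
  rfl

/-- `a^r + b^r - a^q b^(r-q) - a^(r-q) b^q = (a^q - b^q)(a^(r-q) - b^(r-q)) ≥ 0` for `r` even,
since `q` and `r - q` have the same parity. -/
lemma mixed_pow_le (a b : ℝ) (q s : ℕ) (h : Even (q + s)) :
    a ^ q * b ^ s + a ^ s * b ^ q ≤ a ^ (q + s) + b ^ (q + s) := by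
  have key : 0 ≤ (a ^ q - b ^ q) * (a ^ s - b ^ s) := by
    rcases Nat.even_or_odd q with hq | hq
    · have hs : Even s := (Nat.even_add.mp h).mp hq
      rw [← hq.pow_abs a, ← hq.pow_abs b, ← hs.pow_abs a, ← hs.pow_abs b]
      rcases le_total |a| |b| with hab | hab
      · exact mul_nonneg_of_nonpos_of_nonpos
          (sub_nonpos.2 (pow_le_pow_left₀ (abs_nonneg _) hab _))
          (sub_nonpos.2 (pow_le_pow_left₀ (abs_nonneg _) hab _))
      · exact mul_nonneg
          (sub_nonneg.2 (pow_le_pow_left₀ (abs_nonneg _) hab _))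
          (sub_nonneg.2 (pow_le_pow_left₀ (abs_nonneg _) hab _))
    · have hs : Odd s := by
        rw [← Nat.not_even_iff_odd] at hq ⊢
        exact fun hs => hq ((Nat.even_add.mp h).mpr hs)
      rcases le_total a b with hab | hab
      · exact mul_nonneg_of_nonpos_of_nonpos
          (sub_nonpos.2 (hq.strictMono_pow.monotone hab))
          (sub_nonpos.2 (hs.strictMono_pow.monotone hab))
      · exact mul_nonneg
          (sub_nonneg.2 (hq.strictMono_pow.monotone hab))
          (sub_nonneg.2 (hs.strictMono_pow.monotone hab))
  rw [pow_add, pow_add]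
  nlinarith [key]

lemma sum_pow_mul_pow_le (a b : ℝ) (m : ℕ) :
    ∑ q ∈ Finset.range (2 * m + 1), a ^ q * b ^ (2 * m - q)
      ≤ (2 * m + 1) / 2 * (a ^ (2 * m) + b ^ (2 * m)) := by
  have h1 : ∑ q ∈ Finset.range (2 * m + 1), a ^ q * b ^ (2 * m - q)
      = ∑ q ∈ Finset.range (2 * m + 1), a ^ (2 * m - q) * b ^ q := by
    rw [← Finset.sum_range_reflect]
    refine Finset.sum_congr rfl fun q hq => ?_
    rw [Finset.mem_range] at hq
    congr 2; omega
  have h2 : ∑ q ∈ Finset.range (2 * m + 1),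
      (a ^ q * b ^ (2 * m - q) + a ^ (2 * m - q) * b ^ q)
      ≤ ∑ q ∈ Finset.range (2 * m + 1), (a ^ (2 * m) + b ^ (2 * m)) := by
    refine Finset.sum_le_sum fun q hq => ?_
    rw [Finset.mem_range] at hq
    have hqs : q + (2 * m - q) = 2 * m := by omega
    have := mixed_pow_le a b q (2 * m - q) (by rw [hqs]; exact even_two_mul m)
    rwa [hqs] at this
  rw [Finset.sum_add_distrib, ← h1, Finset.sum_const, Finset.card_range, nsmul_eq_mul] at h2
  push_cast at h2
  linarith

/-- Noncommutative telescoping of a difference of powers. -/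
lemma pow_succ_sub_pow_succ {R : Type*} [Ring R] (A B : R) (k : ℕ) :
    A ^ (k + 1) - B ^ (k + 1)
      = ∑ q ∈ Finset.range (k + 1), A ^ q * (A - B) * B ^ (k - q) := by
  induction k with
  | zero => simp
  | succ k ih =>
    rw [Finset.sum_range_succ]
    have : ∑ q ∈ Finset.range (k + 1), A ^ q * (A - B) * B ^ (k + 1 - q)
        = (A ^ (k + 1) - B ^ (k + 1)) * B := by
      rw [ih, Finset.sum_mul]
      refine Finset.sum_congr rfl fun q hq => ?_
      rw [Finset.mem_range] at hq
      rw [show k + 1 - q = (k - q) + 1 by omega, pow_succ, mul_assoc _ _ B]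
    rw [this, Nat.sub_self, pow_zero, mul_one, pow_succ A (k + 1), pow_succ B (k + 1), sub_mul,
      mul_sub]
    abel

/-- If `A - B = c x x*` with `c = ±2`, then the increment of `x* H^(2m+1) x` between `B` and `A`
is controlled by `x* A^(2m) x + x* B^(2m) x`. -/
lemma quadForm_increment_le {d : ℕ} {A B : Matrix (Fin d) (Fin d) ℂ} (hA : A.IsHermitian)
    (hB : B.IsHermitian) (x : Fin d → ℂ) (s : ℝ) (hs : s * s = 1)
    (hAB : A - B = (2 * s) • Matrix.vecMulVec x (star x)) (m : ℕ) :
    s * (quadForm x (A ^ (2 * m + 1)) - quadForm x (B ^ (2 * m + 1)))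
      ≤ (2 * m + 1) * (∑ i, ‖x i‖ ^ 2) * (quadForm x (A ^ (2 * m)) + quadForm x (B ^ (2 * m))) := by
  obtain ⟨l, w, hw, hlw⟩ := exists_spectral_weights hA x
  obtain ⟨k, v, hv, hkv⟩ := exists_spectral_weights hB x
  have hq : ∀ (C : Matrix (Fin d) (Fin d) ℂ) (D : Matrix (Fin d) (Fin d) ℂ),
      star x ⬝ᵥ ((C * Matrix.vecMulVec x (star x) * D) *ᵥ x)
        = (star x ⬝ᵥ (C *ᵥ x)) * (star x ⬝ᵥ (D *ᵥ x)) := by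
    intro C D
    rw [← Matrix.mulVec_mulVec, ← Matrix.mulVec_mulVec, Matrix.vecMulVec_mulVec,
      Matrix.mulVec_smul, dotProduct_smul]
    rfl
  have hqA : ∀ q, quadForm x (A ^ q) = ∑ i, l i ^ q * w i := fun q => by
    rw [quadForm, hlw, Complex.ofReal_re]
  have hqB : ∀ q, quadForm x (B ^ q) = ∑ i, k i ^ q * v i := fun q => by
    rw [quadForm, hkv, Complex.ofReal_re]
  have hx : quadForm x 1 = ∑ i, ‖x i‖ ^ 2 := by
    rw [quadForm, Matrix.one_mulVec, dotProduct, Complex.re_sum]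
    refine Finset.sum_congr rfl fun i _ => ?_
    rw [Pi.star_apply, RCLike.star_def, Complex.conj_mul', ← Complex.ofReal_pow, Complex.ofReal_re]
  have hsw : ∑ i, w i = ∑ i, ‖x i‖ ^ 2 := by
    rw [← hx, ← pow_zero A, hqA]; simp
  have hsv : ∑ i, v i = ∑ i, ‖x i‖ ^ 2 := by
    rw [← hx, ← pow_zero B, hqB]; simp
  have hdiff : quadForm x (A ^ (2 * m + 1)) - quadForm x (B ^ (2 * m + 1))
      = 2 * s * ∑ q ∈ Finset.range (2 * m + 1),
          quadForm x (A ^ q) * quadForm x (B ^ (2 * m - q)) := by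
    rw [quadForm, quadForm, ← Complex.sub_re, ← dotProduct_sub, ← Matrix.sub_mulVec,
      pow_succ_sub_pow_succ, hAB, Matrix.sum_mulVec, dotProduct_sum, Complex.re_sum,
      Finset.mul_sum]
    refine Finset.sum_congr rfl fun q _ => ?_
    rw [Matrix.mul_smul, Matrix.smul_mul, Matrix.smul_mulVec, dotProduct_smul, hq, hqA, hqB,
      hlw, hkv, ← Complex.ofReal_mul, Complex.real_smul, ← Complex.ofReal_mul,
      Complex.ofReal_re]
  have hsum : ∑ q ∈ Finset.range (2 * m + 1),
      quadForm x (A ^ q) * quadForm x (B ^ (2 * m - q))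
      = ∑ i, ∑ j, (w i * v j) *
          ∑ q ∈ Finset.range (2 * m + 1), l i ^ q * k j ^ (2 * m - q) := by
    simp_rw [hqA, hqB, Finset.sum_mul_sum, Finset.mul_sum]
    rw [Finset.sum_comm]
    refine Finset.sum_congr rfl fun i _ => ?_
    rw [Finset.sum_comm]
    refine Finset.sum_congr rfl fun j _ => Finset.sum_congr rfl fun q _ => ?_
    ring
  have hle : ∑ q ∈ Finset.range (2 * m + 1),
      quadForm x (A ^ q) * quadForm x (B ^ (2 * m - q))
      ≤ ∑ i, ∑ j, (w i * v j) * ((2 * m + 1) / 2 * (l i ^ (2 * m) + k j ^ (2 * m))) := by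
    rw [hsum]
    refine Finset.sum_le_sum fun i _ => Finset.sum_le_sum fun j _ => ?_
    exact mul_le_mul_of_nonneg_left (sum_pow_mul_pow_le _ _ _) (mul_nonneg (hw i) (hv j))
  have heval : ∑ i, ∑ j, (w i * v j) * ((2 * m + 1) / 2 * (l i ^ (2 * m) + k j ^ (2 * m)))
      = (2 * m + 1) / 2 * ((∑ i, l i ^ (2 * m) * w i) * (∑ j, v j)
        + (∑ i, w i) * ∑ j, k j ^ (2 * m) * v j) := by
    rw [Finset.sum_mul_sum, Finset.sum_mul_sum, ← Finset.sum_add_distrib, Finset.mul_sum]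
    refine Finset.sum_congr rfl fun i _ => ?_
    rw [← Finset.sum_add_distrib, Finset.mul_sum]
    refine Finset.sum_congr rfl fun j _ => ?_
    ring
  rw [heval, hsw, hsv, ← hqA, ← hqB] at hle
  rw [hdiff]
  calc s * (2 * s * ∑ q ∈ Finset.range (2 * m + 1),
          quadForm x (A ^ q) * quadForm x (B ^ (2 * m - q)))
      = 2 * ((s * s) * ∑ q ∈ Finset.range (2 * m + 1),
          quadForm x (A ^ q) * quadForm x (B ^ (2 * m - q))) := by ring
    _ ≤ _ := by rw [hs]; linarith

/-! ### Even moments of the Rademacher sum -/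

lemma boolSign_mul_self (b : Bool) : boolSign b * boolSign b = 1 := by
  cases b <;> simp [boolSign]

lemma radSum_isHermitian {d n : ℕ} (X : Matrix (Fin d) (Fin n) ℂ) (ε : Fin n → Bool) :
    (radSum X ε).IsHermitian := by
  unfold radSum Matrix.IsHermitian
  rw [Matrix.conjTranspose_sum]
  refine Finset.sum_congr rfl fun j _ => ?_
  rw [Matrix.conjTranspose_smul, Matrix.conjTranspose_vecMulVec, star_star, star_trivial]

/-- Reversal of the `j`-th sign. -/
def flipSign {n : ℕ} (j : Fin n) (ε : Fin n → Bool) : Fin n → Bool :=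
  Function.update ε j (!ε j)

lemma flipSign_involutive {n : ℕ} (j : Fin n) : Function.Involutive (flipSign j) := by
  intro ε
  simp [flipSign]

lemma boolSign_flipSign {n : ℕ} (j : Fin n) (ε : Fin n → Bool) :
    boolSign (flipSign j ε j) = - boolSign (ε j) := by
  simp only [flipSign, Function.update_self]
  cases ε j <;> simp [boolSign]

lemma radSum_sub_flipSign {d n : ℕ} (X : Matrix (Fin d) (Fin n) ℂ) (ε : Fin n → Bool)
    (j : Fin n) : radSum X ε - radSum X (flipSign j ε)
      = (2 * boolSign (ε j)) • Matrix.vecMulVec (X.col j) (star (X.col j)) := by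
  unfold radSum
  rw [← Finset.sum_sub_distrib, Finset.sum_eq_single j]
  · rw [boolSign_flipSign, ← sub_smul]
    congr 1; ring
  · intro i _ hij
    simp [flipSign, Function.update_of_ne hij]
  · simp

/-- Discrete integration by parts in the sign `εⱼ`. -/
lemma sum_boolSign_quadForm_le {d n : ℕ} (X : Matrix (Fin d) (Fin n) ℂ) (j : Fin n) (m : ℕ) :
    ∑ ε, boolSign (ε j) * quadForm (X.col j) (radSum X ε ^ (2 * m + 1))
      ≤ (2 * m + 1) * (∑ i, ‖X i j‖ ^ 2) * ∑ ε, quadForm (X.col j) (radSum X ε ^ (2 * m)) := by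
  have hflip : ∀ g : (Fin n → Bool) → ℝ, ∑ ε, g (flipSign j ε) = ∑ ε, g ε := fun g =>
    Equiv.sum_comp (flipSign_involutive j).toPerm g
  have h1 : ∑ ε, boolSign (ε j) * quadForm (X.col j) (radSum X ε ^ (2 * m + 1))
      = -∑ ε, boolSign (ε j) * quadForm (X.col j) (radSum X (flipSign j ε) ^ (2 * m + 1)) := by
    rw [← hflip, ← Finset.sum_neg_distrib]
    refine Finset.sum_congr rfl fun ε _ => ?_
    rw [boolSign_flipSign]; ring
  have h2 := hflip fun ε => quadForm (X.col j) (radSum X ε ^ (2 * m))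
  have h3 : ∑ ε, boolSign (ε j) * (quadForm (X.col j) (radSum X ε ^ (2 * m + 1))
        - quadForm (X.col j) (radSum X (flipSign j ε) ^ (2 * m + 1)))
      ≤ ∑ ε, (2 * m + 1) * (∑ i, ‖X i j‖ ^ 2) * (quadForm (X.col j) (radSum X ε ^ (2 * m))
        + quadForm (X.col j) (radSum X (flipSign j ε) ^ (2 * m))) :=
    Finset.sum_le_sum fun ε _ => quadForm_increment_le (radSum_isHermitian X ε)
      (radSum_isHermitian X _) (X.col j) _ (boolSign_mul_self _) (radSum_sub_flipSign X ε j) m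
  simp_rw [mul_sub] at h3
  rw [Finset.sum_sub_distrib, ← Finset.mul_sum, Finset.sum_add_distrib, h2] at h3
  linarith

lemma quadForm_even_pow {d : ℕ} {A : Matrix (Fin d) (Fin d) ℂ} (hA : A.IsHermitian)
    (x : Fin d → ℂ) (m : ℕ) : quadForm x (A ^ (2 * m)) = ∑ i, ‖(A ^ m *ᵥ x) i‖ ^ 2 := by
  have h : star x ⬝ᵥ (A ^ (2 * m) *ᵥ x) = star (A ^ m *ᵥ x) ⬝ᵥ (A ^ m *ᵥ x) := by
    rw [two_mul, pow_add, ← Matrix.mulVec_mulVec, Matrix.star_mulVec, (hA.pow m).eq,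
      Matrix.dotProduct_mulVec]
  rw [quadForm, h, dotProduct, Complex.re_sum]
  refine Finset.sum_congr rfl fun i _ => ?_
  rw [Pi.star_apply, RCLike.star_def, Complex.conj_mul', ← Complex.ofReal_pow, Complex.ofReal_re]

lemma sum_quadForm_even_pow {d n : ℕ} {A : Matrix (Fin d) (Fin d) ℂ} (hA : A.IsHermitian)
    (X : Matrix (Fin d) (Fin n) ℂ) (m : ℕ) :
    ∑ j, quadForm (X.col j) (A ^ (2 * m)) = frobSq (A ^ m * X) := by
  simp_rw [quadForm_even_pow hA]
  rfl

lemma frobSq_eq_trace {d : ℕ} {A : Matrix (Fin d) (Fin d) ℂ} (hA : A.IsHermitian) (m : ℕ) :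
    frobSq (A ^ m) = (Matrix.trace (A ^ (2 * m))).re := by
  have h : A ^ (2 * m) = (A ^ m)ᴴ * A ^ m := by
    rw [(hA.pow m).eq, ← pow_add, two_mul]
  rw [h, Matrix.trace, Complex.re_sum, frobSq]
  refine Finset.sum_congr rfl fun j _ => ?_
  rw [Matrix.diag_apply, Matrix.mul_apply, Complex.re_sum]
  refine Finset.sum_congr rfl fun i _ => ?_
  rw [Matrix.conjTranspose_apply, RCLike.star_def, Complex.conj_mul', ← Complex.ofReal_pow,
    Complex.ofReal_re]

lemma frobSq_radSum_pow_succ {d n : ℕ} (X : Matrix (Fin d) (Fin n) ℂ) (ε : Fin n → Bool)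
    (m : ℕ) : frobSq (radSum X ε ^ (m + 1))
      = ∑ j, boolSign (ε j) * quadForm (X.col j) (radSum X ε ^ (2 * m + 1)) := by
  rw [frobSq_eq_trace (radSum_isHermitian X ε), show 2 * (m + 1) = (2 * m + 1) + 1 by ring,
    pow_succ]
  nth_rewrite 2 [radSum]
  rw [Matrix.mul_sum, Matrix.trace_sum, Complex.re_sum]
  refine Finset.sum_congr rfl fun j _ => ?_
  rw [Matrix.mul_smul, Matrix.trace_smul, Matrix.mul_vecMulVec, Matrix.trace_vecMulVec,
    Complex.smul_re, smul_eq_mul, quadForm, dotProduct_comm]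

lemma colSq_le {d n : ℕ} (X : Matrix (Fin d) (Fin n) ℂ) (j : Fin n) :
    ∑ i, ‖X i j‖ ^ 2 ≤ colNorm X ^ 2 := by
  have h : √(∑ i, ‖X i j‖ ^ 2) ≤ colNorm X :=
    le_ciSup (f := fun j => √(∑ i, ‖X i j‖ ^ 2)) (Set.finite_range _).bddAbove j
  calc _ = √(∑ i, ‖X i j‖ ^ 2) ^ 2 := (Real.sq_sqrt (by positivity)).symm
    _ ≤ _ := pow_le_pow_left₀ (Real.sqrt_nonneg _) h 2

lemma colSq_le_opNorm {d n : ℕ} (X : Matrix (Fin d) (Fin n) ℂ) (j : Fin n) :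
    ∑ i, ‖X i j‖ ^ 2 ≤ ‖X‖ ^ 2 := by
  have h := norm_mulVec_sq_le X (Pi.single j 1)
  have h1 : ∑ i, ‖(Pi.single j 1 : Fin n → ℂ) i‖ ^ 2 = 1 := by
    rw [Finset.sum_eq_single j] <;> simp +contextual
  rw [h1, mul_one, Matrix.mulVec_single_one] at h
  exact h

/-- The basic recursion: each step costs `2m + 1` and one factor `‖X‖²_{1→2}`. -/
lemma sum_frobSq_succ_le {d n : ℕ} (X : Matrix (Fin d) (Fin n) ℂ) (m : ℕ) :
    ∑ ε, frobSq (radSum X ε ^ (m + 1))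
      ≤ (2 * m + 1) * colNorm X ^ 2 * ∑ ε, frobSq (radSum X ε ^ m * X) := by
  simp_rw [frobSq_radSum_pow_succ]
  rw [Finset.sum_comm]
  have h : ∀ j, ∑ ε, boolSign (ε j) * quadForm (X.col j) (radSum X ε ^ (2 * m + 1))
      ≤ (2 * m + 1) * colNorm X ^ 2 * ∑ ε, quadForm (X.col j) (radSum X ε ^ (2 * m)) := by
    intro j
    refine (sum_boolSign_quadForm_le X j m).trans ?_
    refine mul_le_mul_of_nonneg_right ?_ ?_
    · exact mul_le_mul_of_nonneg_left (colSq_le X j) (by positivity)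
    · refine Finset.sum_nonneg fun ε _ => ?_
      rw [quadForm_even_pow (radSum_isHermitian X ε)]
      positivity
  refine (Finset.sum_le_sum fun j _ => h j).trans (le_of_eq ?_)
  rw [← Finset.mul_sum, Finset.sum_comm]
  simp_rw [sum_quadForm_even_pow (radSum_isHermitian X _)]

/-- The double factorial `(2m-1)‼`, written as a real product. -/
noncomputable def oddProd (m : ℕ) : ℝ := ∏ k ∈ Finset.range m, (2 * (k : ℝ) + 1)

/-- Even trace moments of the Rademacher sum. -/
lemma sum_frobSq_le {d n : ℕ} (X : Matrix (Fin d) (Fin n) ℂ) (m : ℕ) :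
    ∑ ε, frobSq (radSum X ε ^ (m + 1))
      ≤ 2 ^ n * (oddProd (m + 1) * n * (colNorm X * ‖X‖) ^ (2 * (m + 1))) := by
  induction m with
  | zero =>
    refine (sum_frobSq_succ_le X 0).trans ?_
    have hX : frobSq X ≤ n * ‖X‖ ^ 2 := by
      calc frobSq X ≤ ∑ _j : Fin n, ‖X‖ ^ 2 := Finset.sum_le_sum fun j _ => colSq_le_opNorm X j
        _ = _ := by simp
    simp only [pow_zero, Matrix.one_mul, Finset.sum_const, Finset.card_univ, Fintype.card_fun,
      Fintype.card_bool, Fintype.card_fin, nsmul_eq_mul, oddProd]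
    simp only [Nat.cast_zero, mul_zero, zero_add, one_mul, Nat.cast_pow, Nat.cast_ofNat,
      Finset.range_one, Finset.prod_singleton, mul_one]
    calc colNorm X ^ 2 * (2 ^ n * frobSq X) ≤ colNorm X ^ 2 * (2 ^ n * (n * ‖X‖ ^ 2)) := by gcongr
      _ = _ := by ring
  | succ m ih =>
    refine (sum_frobSq_succ_le X (m + 1)).trans ?_
    have h : ∑ ε, frobSq (radSum X ε ^ (m + 1) * X)
        ≤ ‖X‖ ^ 2 * ∑ ε, frobSq (radSum X ε ^ (m + 1)) := by
      rw [Finset.mul_sum]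
      exact Finset.sum_le_sum fun ε _ => frobSq_mul_le' _ _
    have hodd : oddProd (m + 1 + 1) = oddProd (m + 1) * (2 * ((m + 1 : ℕ) : ℝ) + 1) :=
      Finset.prod_range_succ _ _
    calc _ ≤ (2 * ((m + 1 : ℕ) : ℝ) + 1) * colNorm X ^ 2 * (‖X‖ ^ 2 *
          (2 ^ n * (oddProd (m + 1) * n * (colNorm X * ‖X‖) ^ (2 * (m + 1))))) := by
          gcongr; exact h.trans (by gcongr)
      _ = _ := by rw [hodd]; ring

lemma sum_norm_pow_le {d n : ℕ} (X : Matrix (Fin d) (Fin n) ℂ) (m : ℕ) :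
    ∑ ε : Fin n → Bool, ((1:ℝ)/2) ^ n * ‖radSum X ε‖ ^ (2 * (m + 1))
      ≤ oddProd (m + 1) * n * (colNorm X * ‖X‖) ^ (2 * (m + 1)) := by
  have h : ∀ ε, ‖radSum X ε‖ ^ (2 * (m + 1)) ≤ frobSq (radSum X ε ^ (m + 1)) := by
    intro ε
    refine le_trans ?_ (opNorm_sq_le_frobSq _)
    rw [mul_comm, pow_mul]
    exact pow_le_pow_left₀ (by positivity)
      (norm_pow_le_of_isHermitian (radSum_isHermitian X ε) _ (Nat.succ_pos m)) 2
  rw [← Finset.mul_sum]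
  calc _ ≤ ((1:ℝ)/2) ^ n * (2 ^ n * (oddProd (m + 1) * n * (colNorm X * ‖X‖) ^ (2 * (m + 1)))) := by
        gcongr
        exact (Finset.sum_le_sum fun ε _ => h ε).trans (sum_frobSq_le X m)
    _ = _ := by
        rw [← mul_assoc, ← mul_pow]; norm_num

/-! ### The numerical constant -/

/-- The estimate of `oddProd_mul_exp_half_le` at the left end point `p = 2(m+1)`. -/
lemma oddProd_mul_exp_le (m : ℕ) :
    oddProd (m + 2) * Real.exp (m + 1) ≤ (4.5 * ((m : ℝ) + 1)) ^ (m + 2) := by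
  have he := Real.exp_one_lt_d9
  induction m with
  | zero =>
    have : oddProd (0 + 2) = 3 := by norm_num [oddProd, Finset.prod_range_succ]
    rw [this]
    norm_num
    linarith
  | succ m ih =>
    have hodd : oddProd (m + 1 + 2) = oddProd (m + 2) * (2 * ((m + 2 : ℕ) : ℝ) + 1) :=
      Finset.prod_range_succ _ _
    have hbern : 2 * ((m : ℝ) + 1) ^ (m + 2) ≤ ((m : ℝ) + 2) ^ (m + 2) := by
      have hb := one_add_mul_le_pow (a := 1 / ((m : ℝ) + 1))
        (by have : (0:ℝ) ≤ 1 / ((m : ℝ) + 1) := by positivity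
            linarith) (m + 2)
      have h1 : (2:ℝ) ≤ (1 + 1 / ((m : ℝ) + 1)) ^ (m + 2) := by
        refine le_trans ?_ hb
        have : (1:ℝ) ≤ ((m + 2 : ℕ) : ℝ) * (1 / ((m : ℝ) + 1)) := by
          rw [mul_one_div, le_div_iff₀ (by positivity)]
          push_cast; linarith
        linarith
      calc 2 * ((m : ℝ) + 1) ^ (m + 2)
          ≤ (1 + 1 / ((m : ℝ) + 1)) ^ (m + 2) * ((m : ℝ) + 1) ^ (m + 2) := by gcongr
        _ = _ := by rw [← mul_pow]; congr 1; field_simp; ring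
    rw [hodd]
    push_cast
    rw [Real.exp_add]
    calc oddProd (m + 2) * (2 * ((m : ℝ) + 2) + 1) * (Real.exp (m + 1) * Real.exp 1)
        = (oddProd (m + 2) * Real.exp (m + 1)) * ((2 * ((m : ℝ) + 2) + 1) * Real.exp 1) := by ring
      _ ≤ (4.5 * ((m : ℝ) + 1)) ^ (m + 2) * ((2 * ((m : ℝ) + 2) + 1) * 2.8) := by
          refine mul_le_mul ih ?_ (by positivity) (by positivity)
          gcongr; linarith
      _ ≤ (4.5 * ((m : ℝ) + 1)) ^ (m + 2) * (2 * (4.5 * ((m : ℝ) + 2))) := by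
          refine mul_le_mul_of_nonneg_left ?_ (by positivity)
          linarith
      _ = 4.5 ^ (m + 3) * (2 * ((m : ℝ) + 1) ^ (m + 2)) * ((m : ℝ) + 2) := by
          rw [mul_pow]; ring
      _ ≤ 4.5 ^ (m + 3) * ((m : ℝ) + 2) ^ (m + 2) * ((m : ℝ) + 2) := by gcongr
      _ = (4.5 * ((m : ℝ) + 1 + 1)) ^ (m + 1 + 2) := by
          rw [mul_pow, add_assoc (m : ℝ) 1 1, one_add_one_eq_two]; ring

/-- For `p ≤ 2(m+2)` the function `(m+2) log (2.25 p) - p / 2` increases with `p`, which reduces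
the claim to the left end point `p = 2(m+1)`. -/
lemma oddProd_mul_exp_half_le (m : ℕ) (p : ℝ) (h1 : 2 * ((m : ℝ) + 1) ≤ p)
    (h2 : p ≤ 2 * ((m : ℝ) + 2)) :
    oddProd (m + 2) * Real.exp (p / 2) ≤ (2.25 * p) ^ (m + 2) := by
  set t : ℝ := p / (2 * ((m : ℝ) + 1)) with ht
  have hm : (0:ℝ) < (m : ℝ) + 1 := by positivity
  have hpt : p = 2 * ((m : ℝ) + 1) * t := by rw [ht]; field_simp
  have ht1 : 1 ≤ t := by rw [ht, le_div_iff₀ (by positivity)]; linarith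
  have ht0 : 0 < t := by linarith
  have hexp : Real.exp (((m : ℝ) + 1) * (t - 1)) ≤ t ^ (m + 2) := by
    rw [← Real.le_log_iff_exp_le (by positivity), Real.log_pow]
    have hl := Real.one_sub_inv_le_log_of_pos ht0
    have h3 : ((m : ℝ) + 1) * (t - 1) ≤ ((m : ℝ) + 2) * (1 - t⁻¹) := by
      have : ((m : ℝ) + 2) * (1 - t⁻¹) - ((m : ℝ) + 1) * (t - 1)
          = (t - 1) / t * (((m : ℝ) + 2) - ((m : ℝ) + 1) * t) := by field_simp
      have h4 : 0 ≤ (t - 1) / t * (((m : ℝ) + 2) - ((m : ℝ) + 1) * t) :=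
        mul_nonneg (div_nonneg (by linarith) ht0.le) (by linarith)
      linarith
    refine h3.trans ?_
    push_cast
    gcongr
  have hodd : 0 ≤ oddProd (m + 2) := Finset.prod_nonneg fun k _ => by positivity
  calc oddProd (m + 2) * Real.exp (p / 2)
      = (oddProd (m + 2) * Real.exp (m + 1)) * Real.exp (((m : ℝ) + 1) * (t - 1)) := by
        rw [mul_assoc, ← Real.exp_add]; congr 2; rw [hpt]; ring
    _ ≤ (4.5 * ((m : ℝ) + 1)) ^ (m + 2) * t ^ (m + 2) := by
        gcongr
        exact oddProd_mul_exp_le m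
    _ = (2.25 * p) ^ (m + 2) := by
        rw [← mul_pow]; congr 1; rw [hpt]; ring

/-- Some even integer `2(m+1) ≥ p` gives a constant of at most `1.5 √p` in the moment bound. -/
lemma exists_even_exponent (n : ℕ) (hn : 2 ≤ n) (p : ℝ) (hp : 2 * Real.log n ≤ p) :
    ∃ m : ℕ, p ≤ 2 * ((m : ℝ) + 1) ∧ oddProd (m + 1) * n ≤ (2.25 * p) ^ (m + 1) := by
  have hn0 : (0:ℝ) < n := by positivity
  have hlog2 : Real.log 2 ≤ Real.log n := Real.log_le_log (by norm_num) (by exact_mod_cast hn)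
  have hl2 := Real.log_two_gt_d9
  have hnexp : (n : ℝ) ≤ Real.exp (p / 2) := by
    rw [← Real.log_le_iff_le_exp hn0]; linarith
  rcases le_total p 2 with hp2 | hp2
  · refine ⟨0, by norm_num; exact hp2, ?_⟩
    have hn3 : (n : ℝ) < 3 := by
      have : Real.exp (p / 2) ≤ Real.exp 1 := Real.exp_le_exp.2 (by linarith)
      linarith [Real.exp_one_lt_d9]
    have hn2 : n < 3 := by exact_mod_cast hn3
    obtain rfl : n = 2 := by omega
    norm_num [oddProd]
    norm_num at hp
    linarith
  · obtain ⟨m, hm⟩ : ∃ m : ℕ, ⌈p / 2⌉₊ = m + 1 :=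
      Nat.exists_eq_succ_of_ne_zero (Nat.ceil_pos.2 (by linarith)).ne'
    have hup : p / 2 ≤ (m : ℝ) + 1 := by
      have := Nat.le_ceil (p / 2); rw [hm] at this; exact_mod_cast this
    have hlow : (m : ℝ) + 1 < p / 2 + 1 := by
      have := Nat.ceil_lt_add_one (a := p / 2) (by linarith); rw [hm] at this; exact_mod_cast this
    -- When `p = 2` the exponent `4` is taken, so that `oddProd_mul_exp_half_le` applies.
    obtain ⟨k, hk1, hk2⟩ : ∃ k : ℕ, 2 * ((k : ℝ) + 1) ≤ p ∧ p ≤ 2 * ((k : ℝ) + 2) := by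
      rcases m with _ | k
      · refine ⟨0, by norm_num; exact hp2, ?_⟩
        push_cast at hup ⊢; linarith
      · push_cast at hup hlow
        exact ⟨k, by linarith, by linarith⟩
    refine ⟨k + 1, by push_cast; linarith, ?_⟩
    have hodd : 0 ≤ oddProd (k + 1 + 1) := Finset.prod_nonneg fun k _ => by positivity
    exact (mul_le_mul_of_nonneg_left hnexp hodd).trans (oddProd_mul_exp_half_le k p hk1 hk2)

/-! ### Real exponents -/

/-- Rudelson's lemma: Rademacher sums of rank-one matrices built from the columns of X. -/
theorem rudelson_lemma (d n : ℕ) (hn : 2 ≤ n) (X : Matrix (Fin d) (Fin n) ℂ)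
    (p : ℝ) (hp : 2 * Real.log n ≤ p) :
    (∑ ε : Fin n → Bool, ((1:ℝ)/2) ^ n *
        specNorm (∑ j : Fin n, (if ε j then (1:ℝ) else -1) •
          Matrix.of (fun i i' : Fin d => X i j * star (X i' j))) ^ p) ^ (1/p)
      ≤ 1.5 * Real.sqrt p * colNorm X * specNorm X := by
  change (∑ ε : Fin n → Bool, ((1:ℝ)/2) ^ n * ‖radSum X ε‖ ^ p) ^ (1/p)
      ≤ 1.5 * Real.sqrt p * colNorm X * ‖X‖
  have hp0 : 0 < p := by
    have : 0 < Real.log n := Real.log_pos (by exact_mod_cast hn)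
    linarith
  have hcol : 0 ≤ colNorm X := Real.iSup_nonneg fun j => Real.sqrt_nonneg _
  obtain ⟨m, hpm, hconst⟩ := exists_even_exponent n hn p hp
  set R : ℝ := 1.5 * Real.sqrt p * colNorm X * ‖X‖ with hR
  have hR0 : 0 ≤ R := by positivity
  set S : ℝ := ∑ ε : Fin n → Bool, ((1:ℝ)/2) ^ n * ‖radSum X ε‖ ^ p with hS
  have hS0 : 0 ≤ S := by positivity
  have hq : (0:ℝ) < 2 * ((m : ℝ) + 1) := by positivity
  have hw : ∑ _ε : Fin n → Bool, ((1:ℝ)/2) ^ n = 1 := by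
    simp
  -- Jensen's inequality passes from the exponent `p` to the even exponent `2(m+1) ≥ p`.
  have hjensen : S ^ (2 * ((m : ℝ) + 1) / p)
      ≤ ∑ ε : Fin n → Bool, ((1:ℝ)/2) ^ n * ‖radSum X ε‖ ^ (2 * (m + 1)) := by
    refine (Real.rpow_arith_mean_le_arith_mean_rpow Finset.univ _ _
      (fun _ _ => by positivity) hw (fun _ _ => by positivity)
      ((one_le_div hp0).2 hpm)).trans (le_of_eq ?_)
    refine Finset.sum_congr rfl fun ε _ => ?_
    rw [← Real.rpow_mul (norm_nonneg _), mul_div_cancel₀ _ hp0.ne',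
      ← Real.rpow_natCast _ (2 * (m + 1))]
    push_cast
    rfl
  have hRpow : oddProd (m + 1) * n * (colNorm X * ‖X‖) ^ (2 * (m + 1)) ≤ R ^ (2 * (m + 1)) := by
    have hsq : R ^ 2 = 2.25 * p * (colNorm X * ‖X‖) ^ 2 := by
      rw [hR]
      calc _ = 2.25 * Real.sqrt p ^ 2 * (colNorm X * ‖X‖) ^ 2 := by ring
        _ = _ := by rw [Real.sq_sqrt hp0.le]
    rw [pow_mul R, hsq, mul_pow _ ((colNorm X * ‖X‖) ^ 2), ← pow_mul]
    gcongr
  have hfin : S ^ (2 * ((m : ℝ) + 1) / p) ≤ R ^ (2 * ((m : ℝ) + 1)) := by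
    refine (hjensen.trans ((sum_norm_pow_le X m).trans hRpow)).trans (le_of_eq ?_)
    rw [← Real.rpow_natCast]
    push_cast
    rfl
  rw [← Real.rpow_le_rpow_iff (Real.rpow_nonneg hS0 _) hR0 hq, ← Real.rpow_mul hS0]
  convert hfin using 2
  ring
end

section
/- Let X be an n×n matrix and let R_ρ be a random diagonal matrix whose diagonal entries are i.i.d. Bernoulli(ρ) random variables (0–1 valued with mean ρ ∈ (0,1)). Suppose p ≥ 2 log n and p ≥ 2. Then (E ‖X R_ρ‖^p)^{1/p} ≤ 3√p · (E ‖X R_ρ‖_{1→2}^p)^{1/p} + √ρ · ‖X‖. -/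
/-!
The norm of a random column restriction `X R` is controlled through its Gram matrix: since
`R² = R`, one has `‖X R‖² = ‖X R Xᴴ‖`, and `X R Xᴴ = ∑ i, δᵢ xᵢ xᵢᴴ` is a sum of independent
rank-one matrices with mean `ρ X Xᴴ`. Put `r = p / 2`, and write `E` and `F` for the `p`-th moment
norms of `‖X R‖` and of the largest column norm of `X R`.

* Minkowski's inequality separates the mean (`rpow_center_le`): `E²` is at most
  `ρ ‖X‖²` plus the `r`-th moment norm of `‖X R Xᴴ - ρ X Xᴴ‖`.
* Jensen's inequality against an independent copy, followed by an exchange of coordinates, replaces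
  the centered matrix by the sign series `∑ i, ±δᵢ xᵢ xᵢᴴ` at the cost of a factor `2`
  (`symmetrization`).
* Rudelson's lemma (`rudelson`) bounds the `r`-th moment norm of `‖∑ i, ±yᵢ yᵢᴴ‖` by
  `√(9 r / 2)` times the largest column norm of `Y` times `‖Y‖`, provided `log n ≤ r`.
* Cauchy–Schwarz (`weighted_cauchy_schwarz`) then gives `E² ≤ 3 √p F E + ρ ‖X‖²`, because
  `2 √(9 p / 4) = 3 √p`, and this quadratic inequality forces `E ≤ 3 √p F + √ρ ‖X‖`
  (`le_add_of_sq_le`).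

Rudelson's lemma is proved without the noncommutative Khintchine inequality in its sharp form, by
induction on even trace moments of `S = ∑ i, εᵢ yᵢ yᵢᴴ`. Writing one factor of `S ^ (2q + 2)` as the
sum and averaging over the sign `εᵢ` produces a difference of odd powers of two Hermitian matrices
that differ by a multiple of `yᵢ yᵢᴴ`. Such a difference is estimated by even powers
(`trace_power_difference`), a trace version of the scalar inequality `scalar_power_difference`,
transferred by expanding both matrices in their eigenbases (`exists_trace_pow_mul_pow`). The result
is `𝔼 tr S ^ (2q) ≤ n q ^ q σ ^ (2q)` with `σ` the largest column norm times `‖Y‖` (`rad_moment`).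
With `q = ⌈r⌉`, the dimension is absorbed through `n ≤ exp r` (`card_mul_pow_self_le`).
-/

open scoped BigOperators

namespace RandomRestriction

section MatrixFacts

open Matrix
open scoped Matrix.Norms.L2Operator

/-! ### Traces of powers of Hermitian matrices -/

lemma specNorm_eq_norm {m n : ℕ} (A : Matrix (Fin m) (Fin n) ℂ) : specNorm A = ‖A‖ := rfl

variable {n : ℕ}

/-- Spectral theorem, stated simultaneously for all powers of `W` so that one unitary serves them
all. -/
lemma exists_unitary_pow {W : Matrix (Fin n) (Fin n) ℂ} (hW : W.IsHermitian) :
    ∃ (U : Matrix (Fin n) (Fin n) ℂ) (w : Fin n → ℝ), Uᴴ * U = 1 ∧ U * Uᴴ = 1 ∧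
      ∀ a : ℕ, W ^ a = U * diagonal (fun i => ((w i ^ a : ℝ) : ℂ)) * Uᴴ := by
  have h1 : (hW.eigenvectorUnitary : Matrix (Fin n) (Fin n) ℂ)ᴴ * hW.eigenvectorUnitary = 1 :=
    Unitary.coe_star_mul_self hW.eigenvectorUnitary
  have h2 : (hW.eigenvectorUnitary : Matrix (Fin n) (Fin n) ℂ) * (hW.eigenvectorUnitary : Matrix (Fin n) (Fin n) ℂ)ᴴ = 1 :=
    Unitary.coe_mul_star_self hW.eigenvectorUnitary
  refine ⟨(hW.eigenvectorUnitary : Matrix (Fin n) (Fin n) ℂ), hW.eigenvalues, h1, h2, fun a => ?_⟩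
  have h := hW.spectral_theorem
  rw [Unitary.conjStarAlgAut_apply, star_eq_conjTranspose] at h
  set U := (hW.eigenvectorUnitary : Matrix (Fin n) (Fin n) ℂ)
  induction a with
  | zero => simp [h2]
  | succ a ih =>
    rw [pow_succ, ih]
    nth_rewrite 2 [h]
    calc _ = U * diagonal (fun i => ((hW.eigenvalues i ^ a : ℝ) : ℂ)) * (Uᴴ * U) *
              diagonal (RCLike.ofReal ∘ hW.eigenvalues) * Uᴴ := by simp only [Matrix.mul_assoc]
      _ = U * (diagonal (fun i => ((hW.eigenvalues i ^ a : ℝ) : ℂ)) *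
              diagonal (RCLike.ofReal ∘ hW.eigenvalues)) * Uᴴ := by
            rw [h1, Matrix.mul_one]; simp only [Matrix.mul_assoc]
      _ = _ := by
            rw [diagonal_mul_diagonal]
            simp [pow_succ]

/-- Joint spectral expansion of two Hermitian matrices, which need not commute. The weights are
`c i j = |⟪uᵢ, vⱼ⟫|²` for eigenbases `u` of `W` and `v` of `Y`; being independent of the exponents
and nonnegative, they turn a scalar inequality in the eigenvalues into a trace inequality. -/
lemma exists_trace_pow_mul_pow {W Y : Matrix (Fin n) (Fin n) ℂ}
    (hW : W.IsHermitian) (hY : Y.IsHermitian) :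
    ∃ (c : Fin n → Fin n → ℝ) (w y : Fin n → ℝ), (∀ i j, 0 ≤ c i j) ∧
      ∀ a b : ℕ, (trace (W ^ a * Y ^ b)).re = ∑ i, ∑ j, c i j * (w i ^ a * y j ^ b) := by
  obtain ⟨U, w, -, -, hw⟩ := exists_unitary_pow hW
  obtain ⟨V, y, -, -, hy⟩ := exists_unitary_pow hY
  refine ⟨fun i j => Complex.normSq ((Uᴴ * V) i j), w, y, fun i j => Complex.normSq_nonneg _,
    fun a b => ?_⟩
  have h : trace (W ^ a * Y ^ b) = trace (diagonal (fun i => ((w i ^ a : ℝ) : ℂ)) * (Uᴴ * V) *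
      (diagonal (fun i => ((y i ^ b : ℝ) : ℂ)) * (Uᴴ * V)ᴴ)) := by
    rw [hw, hy, conjTranspose_mul, conjTranspose_conjTranspose]
    simp only [Matrix.mul_assoc]
    rw [trace_mul_comm]
    simp only [Matrix.mul_assoc]
  rw [h, trace, Complex.re_sum]
  refine Finset.sum_congr rfl fun i _ => ?_
  rw [diag_apply, mul_apply, Complex.re_sum]
  refine Finset.sum_congr rfl fun j _ => ?_
  rw [diagonal_mul, diagonal_mul, conjTranspose_apply]
  have : (((w i ^ a : ℝ) : ℂ) * (Uᴴ * V) i j * (((y j ^ b : ℝ) : ℂ) * star ((Uᴴ * V) i j)))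
      = ((Complex.normSq ((Uᴴ * V) i j) * (w i ^ a * y j ^ b) : ℝ) : ℂ) := by
    rw [Complex.ofReal_mul, ← Complex.mul_conj, Complex.star_def]
    push_cast
    ring
  rw [this, Complex.ofReal_re]

/-- The operator norm is dominated by an even Schatten norm: `‖W‖` is the modulus of an eigenvalue,
and all summands of `tr W ^ (2q)` are nonnegative. -/
lemma norm_pow_le_trace {W : Matrix (Fin n) (Fin n) ℂ} (hW : W.IsHermitian) {q : ℕ} (hq : q ≠ 0) :
    ‖W‖ ^ (2 * q) ≤ (trace (W ^ (2 * q))).re := by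
  obtain ⟨U, w, h1, h2, hw⟩ := exists_unitary_pow hW
  have htr : (trace (W ^ (2 * q))).re = ∑ i, w i ^ (2 * q) := by
    rw [hw, trace_mul_comm, ← Matrix.mul_assoc, h1, Matrix.one_mul, trace_diagonal, Complex.re_sum]
    simp only [Complex.ofReal_re]
  have hW1 : W = U * diagonal (fun i => ((w i : ℝ) : ℂ)) * Uᴴ := by simpa using hw 1
  have hUn : ‖U‖ ≤ 1 := by
    have h := l2_opNorm_conjTranspose_mul_self U
    rw [h1] at h
    have h3 : ‖(1 : Matrix (Fin n) (Fin n) ℂ)‖ ≤ 1 := by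
      rw [← diagonal_one, l2_opNorm_diagonal]
      exact (pi_norm_le_iff_of_nonneg zero_le_one).2 fun i => by simp
    nlinarith [norm_nonneg U]
  have hnorm : ‖W‖ ≤ ‖fun i => ((w i : ℝ) : ℂ)‖ := by
    rw [← l2_opNorm_diagonal]
    calc ‖W‖ = ‖U * diagonal (fun i => ((w i : ℝ) : ℂ)) * Uᴴ‖ := by rw [← hW1]
      _ ≤ ‖U‖ * ‖diagonal (fun i => ((w i : ℝ) : ℂ))‖ * ‖U‖ := by
        refine (l2_opNorm_mul _ _).trans ?_
        rw [l2_opNorm_conjTranspose]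
        gcongr
        exact l2_opNorm_mul _ _
      _ ≤ 1 * ‖diagonal (fun i => ((w i : ℝ) : ℂ))‖ * 1 := by gcongr
      _ = _ := by ring
  rw [htr]
  have hnn : ∀ i ∈ Finset.univ, 0 ≤ w i ^ (2 * q) := fun i _ => by rw [pow_mul]; positivity
  rcases isEmpty_or_nonempty (Fin n) with he | he
  · have : ‖W‖ = 0 := by
      rw [Subsingleton.elim W 0, norm_zero]
    rw [this, zero_pow (by omega)]
    exact Finset.sum_nonneg hnn
  · obtain ⟨i, hi⟩ := Finite.exists_max (fun i => |w i|)
    have : ‖W‖ ≤ |w i| := hnorm.trans ((pi_norm_le_iff_of_nonneg (abs_nonneg _)).2 fun j => by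
      simpa using hi j)
    calc ‖W‖ ^ (2 * q) ≤ |w i| ^ (2 * q) := by gcongr
      _ = w i ^ (2 * q) := by rw [pow_mul, sq_abs, ← pow_mul]
      _ ≤ _ := Finset.single_le_sum hnn (Finset.mem_univ i)

/-- Expanding `x ^ (2q+1) - y ^ (2q+1)` as `(x - y)` times a geometric sum, the terms of the sum are
paired by `k ↔ 2q - k`, and each pair is at most `x ^ (2q) + y ^ (2q)` by the rearrangement
inequality for `|x|` and `|y|`. -/
lemma scalar_power_difference (q : ℕ) (x y : ℝ) :
    (x - y) * (x ^ (2 * q + 1) - y ^ (2 * q + 1))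
      ≤ (2 * q + 1) / 2 * ((x - y) ^ 2 * (x ^ (2 * q) + y ^ (2 * q))) := by
  have hterm : ∀ k ∈ Finset.range (2 * q + 1),
      x ^ k * y ^ (2 * q - k) + x ^ (2 * q - k) * y ^ k ≤ x ^ (2 * q) + y ^ (2 * q) := by
    intro k hk
    have hk' : k ≤ 2 * q := by simpa [Nat.lt_succ_iff] using hk
    have hx : x ^ (2 * q) = |x| ^ k * |x| ^ (2 * q - k) := by
      rw [← pow_add, Nat.add_sub_cancel' hk', pow_mul, pow_mul, sq_abs]
    have hy : y ^ (2 * q) = |y| ^ k * |y| ^ (2 * q - k) := by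
      rw [← pow_add, Nat.add_sub_cancel' hk', pow_mul, pow_mul, sq_abs]
    have h1 : x ^ k * y ^ (2 * q - k) ≤ |x| ^ k * |y| ^ (2 * q - k) := by
      rw [← abs_pow, ← abs_pow, ← abs_mul]; exact le_abs_self _
    have h2 : x ^ (2 * q - k) * y ^ k ≤ |x| ^ (2 * q - k) * |y| ^ k := by
      rw [← abs_pow, ← abs_pow, ← abs_mul]; exact le_abs_self _
    have h3 : 0 ≤ (|x| ^ k - |y| ^ k) * (|x| ^ (2 * q - k) - |y| ^ (2 * q - k)) := by
      rcases le_total |x| |y| with h | h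
      · exact mul_nonneg_of_nonpos_of_nonpos (sub_nonpos.2 (by gcongr)) (sub_nonpos.2 (by gcongr))
      · exact mul_nonneg (sub_nonneg.2 (by gcongr)) (sub_nonneg.2 (by gcongr))
    rw [hx, hy]
    nlinarith
  have hgeom := (Commute.all x y).geom_sum₂_mul (2 * q + 1)
  have hrefl : ∑ k ∈ Finset.range (2 * q + 1), x ^ (2 * q - k) * y ^ k
      = ∑ k ∈ Finset.range (2 * q + 1), x ^ k * y ^ (2 * q - k) := by
    rw [← Finset.sum_range_reflect]
    refine Finset.sum_congr rfl fun k hk => ?_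
    have hk' : k ≤ 2 * q := by simpa [Nat.lt_succ_iff] using hk
    have e1 : 2 * q + 1 - 1 - k = 2 * q - k := by omega
    rw [e1, Nat.sub_sub_self hk']
  have hsum := Finset.sum_le_sum hterm
  rw [Finset.sum_add_distrib, hrefl, Finset.sum_const, Finset.card_range, nsmul_eq_mul] at hsum
  push_cast at hsum
  simp only [Nat.add_sub_cancel] at hgeom
  rw [← hgeom]
  nlinarith [mul_le_mul_of_nonneg_left hsum (sq_nonneg (x - y))]

/-- The trace form of `scalar_power_difference`. Only words of the form `W ^ a * Y ^ b` appear after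
cyclic rotation, which is what makes the joint spectral expansion applicable. -/
lemma trace_power_difference {W Y : Matrix (Fin n) (Fin n) ℂ}
    (hW : W.IsHermitian) (hY : Y.IsHermitian) (q : ℕ) :
    (trace ((W - Y) * (W ^ (2 * q + 1) - Y ^ (2 * q + 1)))).re
      ≤ (2 * q + 1) / 2 * ((trace ((W - Y) * (W - Y) * W ^ (2 * q))).re +
          (trace ((W - Y) * (W - Y) * Y ^ (2 * q))).re) := by
  obtain ⟨c, w, y, hc, h⟩ := exists_trace_pow_mul_pow hW hY
  have e1 : trace ((W - Y) * (W ^ (2 * q + 1) - Y ^ (2 * q + 1))) =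
      trace (W ^ (2 * q + 2) * Y ^ 0) - trace (W ^ 1 * Y ^ (2 * q + 1))
        - trace (W ^ (2 * q + 1) * Y ^ 1) + trace (W ^ 0 * Y ^ (2 * q + 2)) := by
    rw [trace_mul_comm (W ^ (2 * q + 1))]
    simp only [sub_mul, mul_sub, trace_sub, pow_zero, one_mul, mul_one, pow_one, ← pow_succ']
    ring
  have e2 : trace ((W - Y) * (W - Y) * W ^ (2 * q)) =
      trace (W ^ (2 * q + 2) * Y ^ 0) - trace (W ^ (2 * q + 1) * Y ^ 1)
        - trace (W ^ (2 * q + 1) * Y ^ 1) + trace (W ^ (2 * q) * Y ^ 2) := by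
    have h1 : trace (W * Y * W ^ (2 * q)) = trace (W ^ (2 * q + 1) * Y) := by
      rw [trace_mul_comm, ← Matrix.mul_assoc, ← pow_succ]
    have h2 : trace (Y * W * W ^ (2 * q)) = trace (W ^ (2 * q + 1) * Y) := by
      rw [Matrix.mul_assoc, ← pow_succ', trace_mul_comm]
    have h3 : trace (Y * Y * W ^ (2 * q)) = trace (W ^ (2 * q) * Y ^ 2) := by
      rw [trace_mul_comm, ← sq]
    have h4 : W * W * W ^ (2 * q) = W ^ (2 * q + 2) := by
      rw [Matrix.mul_assoc, ← pow_succ', ← pow_succ']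
    simp only [sub_mul, mul_sub, trace_sub, pow_zero, mul_one, pow_one, h1, h2, h3, h4]
    ring
  have e3 : trace ((W - Y) * (W - Y) * Y ^ (2 * q)) =
      trace (W ^ 2 * Y ^ (2 * q)) - trace (W ^ 1 * Y ^ (2 * q + 1))
        - trace (W ^ 1 * Y ^ (2 * q + 1)) + trace (W ^ 0 * Y ^ (2 * q + 2)) := by
    have h1 : trace (Y * W * Y ^ (2 * q)) = trace (W * Y ^ (2 * q + 1)) := by
      rw [Matrix.mul_assoc, trace_mul_comm, Matrix.mul_assoc, ← pow_succ]
    have h2 : trace (W * Y * Y ^ (2 * q)) = trace (W * Y ^ (2 * q + 1)) := by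
      rw [Matrix.mul_assoc, ← pow_succ']
    have h4 : Y * Y * Y ^ (2 * q) = Y ^ (2 * q + 2) := by
      rw [Matrix.mul_assoc, ← pow_succ', ← pow_succ']
    simp only [sub_mul, mul_sub, trace_sub, pow_zero, one_mul, pow_one, h1, h2, h4, ← sq W]
    ring
  rw [e1, e2, e3]
  simp only [Complex.add_re, Complex.sub_re, h]
  simp only [← Finset.sum_add_distrib, ← Finset.sum_sub_distrib, Finset.mul_sum]
  refine Finset.sum_le_sum fun i _ => Finset.sum_le_sum fun j _ => ?_
  have := mul_le_mul_of_nonneg_left (scalar_power_difference q (w i) (y j)) (hc i j)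
  refine le_of_eq_of_le ?_ (this.trans_eq ?_) <;> ring



/-! ### Rudelson's lemma for sign series -/

/-- The diagonal matrix of the signs encoded by `e`, with `true` read as `1` and `false` as `-1`. -/
def signM (e : Fin n → Bool) : Matrix (Fin n) (Fin n) ℂ :=
  Matrix.diagonal fun i => if e i then 1 else -1

/-- The Rademacher series `∑ i, ±yᵢ yᵢᴴ` built from the columns `yᵢ` of `Y`. -/
def rad (Y : Matrix (Fin n) (Fin n) ℂ) (e : Fin n → Bool) : Matrix (Fin n) (Fin n) ℂ :=
  Y * signM e * Yᴴ

/-- The rank-one matrix `yᵢ yᵢᴴ`, where `yᵢ` is the `i`-th column of `Y`. -/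
def colProj (Y : Matrix (Fin n) (Fin n) ℂ) (i : Fin n) : Matrix (Fin n) (Fin n) ℂ :=
  Y * Matrix.diagonal (Pi.single i 1) * Yᴴ

/-- The sign vector `e` with its `i`-th sign reversed. -/
def flip (i : Fin n) (e : Fin n → Bool) : Fin n → Bool := Function.update e i (!e i)

/-- The real sign encoded by a boolean. -/
def sgn (b : Bool) : ℝ := if b then 1 else -1

lemma sgn_not (b : Bool) : sgn (!b) = -sgn b := by cases b <;> simp [sgn]

lemma sgn_mul_self (b : Bool) : sgn b * sgn b = 1 := by cases b <;> simp [sgn]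

lemma flip_involutive (i : Fin n) : Function.Involutive (flip i) := by
  intro e
  simp [flip]

lemma rad_isHermitian (Y : Matrix (Fin n) (Fin n) ℂ) (e : Fin n → Bool) :
    (rad Y e).IsHermitian := by
  unfold rad signM
  refine isHermitian_mul_mul_conjTranspose _ ?_
  refine isHermitian_diagonal_iff.2 fun i => ?_
  unfold IsSelfAdjoint
  split_ifs <;> simp

lemma rad_eq_sum (Y : Matrix (Fin n) (Fin n) ℂ) (e : Fin n → Bool) :
    rad Y e = ∑ i, ((sgn (e i) : ℝ) : ℂ) • colProj Y i := by
  have h : signM e = ∑ i, ((sgn (e i) : ℝ) : ℂ) • Matrix.diagonal (Pi.single i 1) := by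
    ext a b
    rw [Matrix.sum_apply]
    by_cases hab : a = b
    · subst hab
      cases h : e a <;> simp [signM, sgn, Pi.single_apply, h]
    · simp [signM, Matrix.diagonal_apply_ne _ hab]
  unfold rad colProj
  rw [h, Matrix.mul_sum, Matrix.sum_mul]
  simp only [Matrix.mul_smul, Matrix.smul_mul]

lemma rad_sub_flip (Y : Matrix (Fin n) (Fin n) ℂ) (i : Fin n) (e : Fin n → Bool) :
    rad Y e - rad Y (flip i e) = ((2 * sgn (e i) : ℝ) : ℂ) • colProj Y i := by
  unfold rad colProj
  rw [← sub_mul, ← mul_sub, ← Matrix.smul_mul, ← Matrix.mul_smul]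
  congr 2
  ext a b
  by_cases hab : a = b
  · subst hab
    by_cases hai : a = i
    · subst hai
      cases h : e a <;> simp [signM, sgn, flip, h] <;> norm_num
    · simp [signM, flip, hai]
  · simp [signM, Matrix.diagonal_apply_ne _ hab]

lemma colProj_mul_self (Y : Matrix (Fin n) (Fin n) ℂ) (i : Fin n) :
    colProj Y i * colProj Y i = (((∑ k, ‖Y k i‖ ^ 2 : ℝ)) : ℂ) • colProj Y i := by
  have hd : Matrix.diagonal (Pi.single i (1 : ℂ)) * (Yᴴ * Y) * Matrix.diagonal (Pi.single i 1)
      = (((∑ k, ‖Y k i‖ ^ 2 : ℝ)) : ℂ) • Matrix.diagonal (Pi.single i (1 : ℂ)) := by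
    ext a b
    rw [Matrix.mul_diagonal, Matrix.diagonal_mul, Matrix.smul_apply, Matrix.diagonal_apply]
    by_cases ha : a = i
    · by_cases hb : b = i
      · subst ha hb
        simp only [Pi.single_eq_same, one_mul, mul_one, if_true, smul_eq_mul, Matrix.mul_apply,
          conjTranspose_apply]
        push_cast
        refine Finset.sum_congr rfl fun k _ => ?_
        rw [mul_comm, Complex.star_def, Complex.mul_conj, Complex.normSq_eq_norm_sq]
        push_cast
        rfl
      · have hab : a ≠ b := fun h => hb (h ▸ ha)
        simp [hb, hab]
    · simp [ha]
  unfold colProj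
  calc _ = Y * (Matrix.diagonal (Pi.single i (1 : ℂ)) * (Yᴴ * Y) *
        Matrix.diagonal (Pi.single i 1)) * Yᴴ := by simp only [Matrix.mul_assoc]
    _ = _ := by rw [hd, Matrix.mul_smul, Matrix.smul_mul]

lemma colNorm_nonneg {m : ℕ} (Y : Matrix (Fin m) (Fin n) ℂ) : 0 ≤ colNorm Y :=
  Real.iSup_nonneg fun _ => Real.sqrt_nonneg _

lemma sum_sq_le_colNorm_sq (Y : Matrix (Fin n) (Fin n) ℂ) (i : Fin n) :
    ∑ k, ‖Y k i‖ ^ 2 ≤ colNorm Y ^ 2 := by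
  have h : Real.sqrt (∑ k, ‖Y k i‖ ^ 2) ≤ colNorm Y :=
    le_ciSup (f := fun j => Real.sqrt (∑ k, ‖Y k j‖ ^ 2)) (Set.finite_range _).bddAbove i
  exact (Real.sqrt_le_left (colNorm_nonneg Y)).1 h

lemma trace_conjTranspose_mul_self_re (A : Matrix (Fin n) (Fin n) ℂ) :
    (trace (Aᴴ * A)).re = ∑ j, ∑ i, ‖A i j‖ ^ 2 := by
  rw [trace, Complex.re_sum]
  refine Finset.sum_congr rfl fun j _ => ?_
  rw [diag_apply, mul_apply, Complex.re_sum]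
  refine Finset.sum_congr rfl fun i _ => ?_
  rw [conjTranspose_apply, mul_comm, Complex.star_def, Complex.mul_conj, Complex.ofReal_re,
    Complex.normSq_eq_norm_sq]

/-- The Frobenius norm is an ideal norm: `‖B A‖_F ≤ ‖B‖ ‖A‖_F`. -/
lemma frobenius_mul_le (B A : Matrix (Fin n) (Fin n) ℂ) :
    (trace ((B * A)ᴴ * (B * A))).re ≤ ‖B‖ ^ 2 * (trace (Aᴴ * A)).re := by
  rw [trace_conjTranspose_mul_self_re, trace_conjTranspose_mul_self_re, Finset.mul_sum]
  refine Finset.sum_le_sum fun j _ => ?_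
  have h := l2_opNorm_mulVec B (WithLp.toLp 2 fun i => A i j)
  have h2 := pow_le_pow_left₀ (norm_nonneg _) h 2
  rw [mul_pow, EuclideanSpace.norm_sq_eq, EuclideanSpace.norm_sq_eq] at h2
  simpa [Matrix.mul_apply, Matrix.mulVec, dotProduct] using h2

/-- The variance bound: since `(yᵢ yᵢᴴ)² = ‖yᵢ‖² yᵢ yᵢᴴ`, the sum `∑ i, (yᵢ yᵢᴴ)²` is at most
`σ²` with `σ` the largest column norm times `‖Y‖`, here tested against `S ^ (2q)`. -/
lemma sum_trace_colProj_sq_le (Y S : Matrix (Fin n) (Fin n) ℂ) (hS : S.IsHermitian) (q : ℕ) :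
    ∑ i, (trace (colProj Y i * colProj Y i * S ^ (2 * q))).re
      ≤ (colNorm Y * ‖Y‖) ^ 2 * (trace (S ^ (2 * q))).re := by
  have hSq : S ^ (2 * q) = (S ^ q) * (S ^ q)ᴴ := by
    rw [(hS.pow q).eq, ← pow_add, two_mul]
  have hSq' : S ^ (2 * q) = (S ^ q)ᴴ * (S ^ q) := by
    rw [(hS.pow q).eq, ← pow_add, two_mul]
  -- the `i`-th term is the squared length of the `i`-th column of `S ^ q * Y`
  have hterm : ∀ i, (trace (colProj Y i * S ^ (2 * q))).re = ∑ k, ‖(S ^ q * Y) k i‖ ^ 2 := by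
    intro i
    have h1 : trace (colProj Y i * S ^ (2 * q)) =
        trace (Matrix.diagonal (Pi.single i 1) * ((S ^ q * Y)ᴴ * (S ^ q * Y))) := by
      rw [hSq', conjTranspose_mul]
      unfold colProj
      simp only [Matrix.mul_assoc]
      rw [trace_mul_comm]
      simp only [Matrix.mul_assoc]
    rw [h1, trace, Complex.re_sum]
    rw [Finset.sum_eq_single i]
    · rw [diag_apply, Matrix.diagonal_mul, Pi.single_eq_same, one_mul, mul_apply, Complex.re_sum]
      refine Finset.sum_congr rfl fun k _ => ?_
      rw [conjTranspose_apply, mul_comm, Complex.star_def, Complex.mul_conj, Complex.ofReal_re,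
        Complex.normSq_eq_norm_sq]
    · intro j _ hj
      simp [Matrix.diagonal_mul, hj]
    · simp
  calc ∑ i, (trace (colProj Y i * colProj Y i * S ^ (2 * q))).re
      = ∑ i, (∑ k, ‖Y k i‖ ^ 2) * ∑ k, ‖(S ^ q * Y) k i‖ ^ 2 := by
        refine Finset.sum_congr rfl fun i _ => ?_
        rw [colProj_mul_self, Matrix.smul_mul, trace_smul, smul_eq_mul, Complex.re_ofReal_mul,
          hterm]
    _ ≤ ∑ i, colNorm Y ^ 2 * ∑ k, ‖(S ^ q * Y) k i‖ ^ 2 := by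
        gcongr with i
        exact sum_sq_le_colNorm_sq Y i
    _ = colNorm Y ^ 2 * (trace ((S ^ q * Y)ᴴ * (S ^ q * Y))).re := by
        rw [trace_conjTranspose_mul_self_re, Finset.mul_sum]
    _ = colNorm Y ^ 2 * (trace ((Yᴴ * S ^ q)ᴴ * (Yᴴ * S ^ q))).re := by
        rw [conjTranspose_mul, conjTranspose_mul, conjTranspose_conjTranspose, (hS.pow q).eq,
          trace_mul_comm (Yᴴ * S ^ q)]
    _ ≤ colNorm Y ^ 2 * (‖Yᴴ‖ ^ 2 * (trace ((S ^ q)ᴴ * S ^ q)).re) := by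
        gcongr
        exact frobenius_mul_le _ _
    _ = _ := by
        rw [l2_opNorm_conjTranspose, ← hSq']
        ring

/-- The recursion on even trace moments. Flipping the `i`-th sign preserves the average and negates
`sgn (e i)`, so the average of `sgn (e i) * tr (yᵢ yᵢᴴ S ^ (2q+1))` is half the average of the same
expression with `S ^ (2q+1)` replaced by its change under the flip; `trace_power_difference` bounds
that change. -/
lemma rad_moment_step (Y : Matrix (Fin n) (Fin n) ℂ) (q : ℕ) :
    ∑ e, (trace (rad Y e ^ (2 * (q + 1)))).re ≤
      (2 * q + 1) * (colNorm Y * ‖Y‖) ^ 2 * ∑ e, (trace (rad Y e ^ (2 * q))).re := by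
  have hflip : ∀ (i : Fin n) (F : (Fin n → Bool) → ℝ), ∑ e, F (flip i e) = ∑ e, F e :=
    fun i F => Equiv.sum_comp (flip_involutive i).toPerm F
  -- one factor of `S ^ (2q + 2)` is expanded as a sign series
  have hA : ∀ e, (trace (rad Y e ^ (2 * (q + 1)))).re =
      ∑ i, sgn (e i) * (trace (colProj Y i * rad Y e ^ (2 * q + 1))).re := by
    intro e
    have : rad Y e ^ (2 * (q + 1)) =
        (∑ i, ((sgn (e i) : ℝ) : ℂ) • colProj Y i) * rad Y e ^ (2 * q + 1) := by
      rw [← rad_eq_sum, ← pow_succ']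
      rfl
    rw [this, Finset.sum_mul, trace_sum, Complex.re_sum]
    refine Finset.sum_congr rfl fun i _ => ?_
    rw [Matrix.smul_mul, trace_smul, smul_eq_mul, Complex.re_ofReal_mul]
  have hB : ∀ i, ∑ e, sgn (e i) * (trace (colProj Y i * rad Y e ^ (2 * q + 1))).re ≤
      (2 * q + 1) * ∑ e, (trace (colProj Y i * colProj Y i * rad Y e ^ (2 * q))).re := by
    intro i
    have h1 : ∑ e, sgn (e i) * (trace (colProj Y i * rad Y e ^ (2 * q + 1))).re =
        -∑ e, sgn (e i) * (trace (colProj Y i * rad Y (flip i e) ^ (2 * q + 1))).re := by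
      rw [← hflip i, ← Finset.sum_neg_distrib]
      refine Finset.sum_congr rfl fun e _ => ?_
      have : flip i e i = !e i := by simp [flip]
      rw [this, sgn_not]
      ring
    -- the difference `S - T` from the flipped sum `T` is `2 * sgn (e i) • yᵢ yᵢᴴ`; both sides of
    -- `trace_power_difference` thereby acquire a multiple of `4`
    have h2 : ∀ e, 4 * (sgn (e i) * (trace (colProj Y i * rad Y e ^ (2 * q + 1))).re -
          sgn (e i) * (trace (colProj Y i * rad Y (flip i e) ^ (2 * q + 1))).re) ≤
        (2 * q + 1) * 4 * ((trace (colProj Y i * colProj Y i * rad Y e ^ (2 * q))).re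
          + (trace (colProj Y i * colProj Y i * rad Y (flip i e) ^ (2 * q))).re) := by
      intro e
      have h := trace_power_difference (rad_isHermitian Y e) (rad_isHermitian Y (flip i e)) q
      rw [rad_sub_flip] at h
      simp only [Matrix.smul_mul, Matrix.mul_smul, trace_smul, smul_eq_mul, Complex.re_ofReal_mul,
        Matrix.mul_sub, trace_sub, Complex.sub_re] at h
      have hs := sgn_mul_self (e i)
      have hs' : ∀ t : ℝ, 2 * sgn (e i) * (2 * sgn (e i) * t) = 4 * t := fun t => by
        linear_combination 4 * t * hs
      rw [hs', hs'] at h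
      linarith
    have h3 := Finset.sum_le_sum fun e (_ : e ∈ Finset.univ) => h2 e
    rw [← Finset.mul_sum, ← Finset.mul_sum, Finset.sum_sub_distrib, Finset.sum_add_distrib,
      hflip i (fun e => (trace (colProj Y i * colProj Y i * rad Y e ^ (2 * q))).re)] at h3
    linarith
  calc ∑ e, (trace (rad Y e ^ (2 * (q + 1)))).re
      = ∑ i, ∑ e, sgn (e i) * (trace (colProj Y i * rad Y e ^ (2 * q + 1))).re := by
        rw [Finset.sum_comm]
        exact Finset.sum_congr rfl fun e _ => hA e
    _ ≤ ∑ i, (2 * q + 1) * ∑ e, (trace (colProj Y i * colProj Y i * rad Y e ^ (2 * q))).re :=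
        Finset.sum_le_sum fun i _ => hB i
    _ = (2 * q + 1) * ∑ e, ∑ i, (trace (colProj Y i * colProj Y i * rad Y e ^ (2 * q))).re := by
        rw [← Finset.mul_sum, Finset.sum_comm]
    _ ≤ (2 * q + 1) * ∑ e, (colNorm Y * ‖Y‖) ^ 2 * (trace (rad Y e ^ (2 * q))).re := by
        gcongr with e
        exact sum_trace_colProj_sq_le Y _ (rad_isHermitian Y e) q
    _ = _ := by rw [← Finset.mul_sum]; ring

/-- Bernoulli's inequality `(1 + 1 / q) ^ (q + 1) ≥ (2 q + 1) / q`, cleared of denominators. -/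
lemma odd_mul_pow_self_le (q : ℕ) : (2 * q + 1 : ℝ) * (q : ℝ) ^ q ≤ ((q + 1 : ℕ) : ℝ) ^ (q + 1) := by
  rcases Nat.eq_zero_or_pos q with rfl | hq
  · simp
  · have hq' : (0 : ℝ) < q := by exact_mod_cast hq
    have h := one_add_mul_le_pow (a := 1 / (q : ℝ)) (by linarith [one_div_pos.2 hq']) (q + 1)
    have h2 := mul_le_mul_of_nonneg_right h (pow_pos hq' (q + 1)).le
    rw [← mul_pow] at h2
    have e1 : (1 + 1 / (q : ℝ)) * q = ((q + 1 : ℕ) : ℝ) := by push_cast; field_simp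
    rw [e1] at h2
    refine le_trans (le_of_eq ?_) h2
    push_cast
    field_simp
    ring

/-- Iterating the recursion gives `(2q - 1)!!`, which is replaced by the larger `q ^ q`. -/
lemma rad_moment (Y : Matrix (Fin n) (Fin n) ℂ) (q : ℕ) :
    ∑ e, (trace (rad Y e ^ (2 * q))).re ≤
      2 ^ n * (n * (q : ℝ) ^ q * (colNorm Y * ‖Y‖) ^ (2 * q)) := by
  induction q with
  | zero => simp
  | succ q ih =>
    calc _ ≤ _ := rad_moment_step Y q
      _ ≤ (2 * q + 1) * (colNorm Y * ‖Y‖) ^ 2 *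
          (2 ^ n * (n * (q : ℝ) ^ q * (colNorm Y * ‖Y‖) ^ (2 * q))) := by gcongr
      _ = 2 ^ n * (n * ((2 * q + 1) * (q : ℝ) ^ q) * (colNorm Y * ‖Y‖) ^ (2 * (q + 1))) := by ring
      _ ≤ _ := by
        have := colNorm_nonneg Y
        gcongr
        exact odd_mul_pow_self_le q

/-- The dimension factor is absorbed by the `q`-th power when `q = ⌈r⌉` and `n ≤ exp r`. With
`t = r / q ∈ [1 / 2, 1]` the claim reduces to `exp t ≤ 9 t / 2`. -/
lemma card_mul_pow_self_le {r : ℝ} (hr1 : 1 ≤ r) (hr : Real.log n ≤ r) :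
    (n : ℝ) * (⌈r⌉₊ : ℝ) ^ ⌈r⌉₊ ≤ (9 / 2 * r) ^ ⌈r⌉₊ := by
  set q := ⌈r⌉₊ with hq
  have hrq : r ≤ q := Nat.le_ceil r
  have hqr : (q : ℝ) < r + 1 := Nat.ceil_lt_add_one (by linarith)
  have hq0 : (0 : ℝ) < q := by linarith
  have hn : (n : ℝ) ≤ Real.exp r := by
    rcases Nat.eq_zero_or_pos n with h | h
    · simp [h, Real.exp_nonneg]
    · exact (Real.log_le_iff_le_exp (by exact_mod_cast h)).1 hr
  have hq2 : (q : ℝ) ≤ 2 * r := by linarith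
  set t := r / q with ht
  have ht1 : t ≤ 1 := (div_le_one hq0).2 hrq
  have ht2 : 1 / 2 ≤ t := by rw [ht, le_div_iff₀ hq0]; linarith
  have htr : r = t * q := by rw [ht]; field_simp
  have hexp : Real.exp t ≤ 9 / 2 * t := by
    -- `exp t = e / exp (1 - t) ≤ e / (2 - t)`, and `t * (2 - t) ≥ 3 / 4` on `[1 / 2, 1]`
    have h1 : 1 - t + 1 ≤ Real.exp (1 - t) := Real.add_one_le_exp _
    have h2 : Real.exp t * Real.exp (1 - t) = Real.exp 1 := by rw [← Real.exp_add]; ring_nf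
    have h3 := Real.exp_one_lt_d9
    have h4 : Real.exp t * (2 - t) ≤ 2.7182818286 := by
      nlinarith [Real.exp_pos t]
    have h5 : 2.7182818286 ≤ 9 / 2 * t * (2 - t) := by nlinarith
    exact le_of_mul_le_mul_right (h4.trans h5) (by linarith)
  calc (n : ℝ) * (q : ℝ) ^ q ≤ Real.exp r * (q : ℝ) ^ q := by gcongr
    _ = (Real.exp t * q) ^ q := by
      rw [mul_pow, ← Real.exp_nat_mul, mul_comm (q : ℝ) t, ← htr]
    _ ≤ (9 / 2 * t * q) ^ q := by gcongr
    _ = (9 / 2 * r) ^ q := by rw [mul_assoc, ← htr]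

/-- Rudelson's lemma: the `r`-th moment of a Rademacher series of rank-one matrices. Jensen's
inequality passes from `r` to the even integer `2 ⌈r⌉`, where trace moments are available. -/
lemma rudelson (Y : Matrix (Fin n) (Fin n) ℂ) {r : ℝ} (hr1 : 1 ≤ r) (hr : Real.log n ≤ r) :
    ∑ e : Fin n → Bool, (1 / 2 ^ n : ℝ) * ‖rad Y e‖ ^ r ≤
      (Real.sqrt (9 / 2 * r) * (colNorm Y * ‖Y‖)) ^ r := by
  set q := ⌈r⌉₊ with hq
  have hrq : r ≤ q := Nat.le_ceil r
  have hq0 : q ≠ 0 := by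
    rintro h
    rw [h] at hrq
    norm_num at hrq
    linarith
  have hr0 : 0 < r := by linarith
  have hq0' : (0 : ℝ) < q := by linarith
  have hσ : 0 ≤ colNorm Y * ‖Y‖ := mul_nonneg (colNorm_nonneg Y) (norm_nonneg _)
  set σ := colNorm Y * ‖Y‖
  have hw : ∑ e : Fin n → Bool, (1 / 2 ^ n : ℝ) = 1 := by simp
  have hJ := Real.rpow_arith_mean_le_arith_mean_rpow Finset.univ
    (fun _ : Fin n → Bool => (1 / 2 ^ n : ℝ)) (fun e => ‖rad Y e‖ ^ r) (fun _ _ => by positivity) hw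
    (fun _ _ => by positivity) (p := (2 * q : ℕ) / r)
    (by rw [le_div_iff₀ hr0]; push_cast; linarith)
  have hmom : ∑ e : Fin n → Bool, (1 / 2 ^ n : ℝ) * (‖rad Y e‖ ^ r) ^ (((2 * q : ℕ) : ℝ) / r) ≤
      (Real.sqrt (9 / 2 * r) * σ) ^ (2 * q) := by
    calc _ = ∑ e : Fin n → Bool, (1 / 2 ^ n : ℝ) * ‖rad Y e‖ ^ (2 * q) := by
          refine Finset.sum_congr rfl fun e _ => ?_
          rw [← Real.rpow_mul (norm_nonneg _), mul_div_cancel₀ _ hr0.ne', Real.rpow_natCast]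
      _ ≤ ∑ e : Fin n → Bool, (1 / 2 ^ n : ℝ) * (trace (rad Y e ^ (2 * q))).re := by
          gcongr with e
          exact norm_pow_le_trace (rad_isHermitian Y e) hq0
      _ ≤ (1 / 2 ^ n : ℝ) * (2 ^ n * (n * (q : ℝ) ^ q * σ ^ (2 * q))) := by
          rw [← Finset.mul_sum]
          gcongr
          exact rad_moment Y q
      _ = n * (q : ℝ) ^ q * σ ^ (2 * q) := by field_simp
      _ ≤ (9 / 2 * r) ^ q * σ ^ (2 * q) := by
          gcongr
          exact card_mul_pow_self_le hr1 hr
      _ = _ := by rw [mul_pow (Real.sqrt _), pow_mul (Real.sqrt _), Real.sq_sqrt (by positivity)]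
  have hfin := hJ.trans hmom
  have hA : 0 ≤ ∑ e : Fin n → Bool, (1 / 2 ^ n : ℝ) * ‖rad Y e‖ ^ r := by positivity
  have h2q : (0 : ℝ) < (2 * q : ℕ) := by push_cast; linarith
  have := Real.rpow_le_rpow (by positivity) hfin (z := r / (2 * q : ℕ)) (by positivity)
  rw [← Real.rpow_mul hA, ← Real.rpow_natCast (Real.sqrt _ * σ), ← Real.rpow_mul (by positivity),
    mul_div_cancel₀ _ h2q.ne', div_mul_div_cancel₀ hr0.ne', div_self h2q.ne', Real.rpow_one] at this
  exact this

/-! ### Bernoulli selectors and symmetrization -/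

lemma bw_nonneg {ρ : ℝ} (hρ : ρ ∈ Set.Ioo (0 : ℝ) 1) (f : Fin n → Bool) : 0 ≤ bw ρ f := by
  unfold bw
  refine Finset.prod_nonneg fun i _ => ?_
  split_ifs
  · exact hρ.1.le
  · linarith [hρ.2]

lemma sum_prod_bool (g : Fin n → Bool → ℝ) :
    ∑ f : Fin n → Bool, ∏ i, g i (f i) = ∏ i, (g i true + g i false) := by
  rw [← Fintype.prod_sum]
  simp

lemma sum_bw (ρ : ℝ) : ∑ f : Fin n → Bool, bw ρ f = 1 := by
  unfold bw
  rw [sum_prod_bool fun _ b => if b then ρ else 1 - ρ]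
  simp

lemma sum_bw_selector (ρ : ℝ) (i : Fin n) :
    ∑ f : Fin n → Bool, bw ρ f * (if f i then 1 else 0) = ρ := by
  have h : ∀ f : Fin n → Bool, bw ρ f * (if f i then 1 else 0) =
      ∏ j, (if f j then ρ else 1 - ρ) * (if j = i then (if f j then 1 else 0) else 1) := by
    intro f
    rw [Finset.prod_mul_distrib, Finset.prod_ite_eq' Finset.univ i]
    simp [bw]
  simp_rw [h]
  rw [sum_prod_bool fun j b => (if b then ρ else 1 - ρ) *
    (if j = i then (if b then 1 else 0) else 1)]
  rw [Finset.prod_eq_single i]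
  · simp
  · intro j _ hj
    simp [hj]
  · simp

/-- The random Gram matrix `∑ i, δᵢ xᵢ xᵢᴴ` of the selected columns of `X`. -/
def gram (X : Matrix (Fin n) (Fin n) ℂ) (f : Fin n → Bool) : Matrix (Fin n) (Fin n) ℂ :=
  X * bernM f * Xᴴ

lemma bernM_conjTranspose (f : Fin n → Bool) : (bernM f)ᴴ = bernM f := by
  unfold bernM
  rw [diagonal_conjTranspose]
  congr 1
  ext i
  rw [Pi.star_apply]
  split_ifs <;> simp

lemma bernM_mul_self (f : Fin n → Bool) : bernM f * bernM f = bernM f := by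
  unfold bernM
  rw [diagonal_mul_diagonal]
  congr 1
  ext i
  split_ifs <;> simp

lemma norm_gram (X : Matrix (Fin n) (Fin n) ℂ) (f : Fin n → Bool) :
    ‖gram X f‖ = ‖X * bernM f‖ ^ 2 := by
  have h : gram X f = ((X * bernM f)ᴴ)ᴴ * (X * bernM f)ᴴ := by
    rw [conjTranspose_conjTranspose, conjTranspose_mul, bernM_conjTranspose, ← Matrix.mul_assoc,
      Matrix.mul_assoc X, bernM_mul_self]
    rfl
  rw [h, l2_opNorm_conjTranspose_mul_self, l2_opNorm_conjTranspose, sq]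

lemma sum_bw_smul_gram (X : Matrix (Fin n) (Fin n) ℂ) (ρ : ℝ) :
    ∑ f : Fin n → Bool, ((bw ρ f : ℝ) : ℂ) • gram X f = (ρ : ℂ) • (X * Xᴴ) := by
  have h : ∑ f : Fin n → Bool, ((bw ρ f : ℝ) : ℂ) • bernM f =
      (ρ : ℂ) • (1 : Matrix (Fin n) (Fin n) ℂ) := by
    ext a b
    rw [Matrix.sum_apply]
    by_cases hab : a = b
    · subst hab
      have := congrArg (fun x : ℝ => (x : ℂ)) (sum_bw_selector ρ a)
      simp only [Complex.ofReal_sum, Complex.ofReal_mul] at this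
      simp only [Matrix.smul_apply, bernM, diagonal_apply_eq, one_apply_eq, smul_eq_mul, mul_one]
      refine Eq.trans (Finset.sum_congr rfl fun f _ => ?_) this
      split_ifs <;> simp
    · simp [bernM, hab]
  unfold gram
  have h2 : X * (∑ f : Fin n → Bool, ((bw ρ f : ℝ) : ℂ) • bernM f) * Xᴴ =
      ∑ f : Fin n → Bool, ((bw ρ f : ℝ) : ℂ) • (X * bernM f * Xᴴ) := by
    rw [Matrix.mul_sum, Matrix.sum_mul]
    simp only [Matrix.mul_smul, Matrix.smul_mul]
  rw [← h2, h, Matrix.mul_smul, Matrix.mul_one, Matrix.smul_mul]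

/-- Jensen's inequality against an independent copy: the centered Gram matrix is dominated by
the symmetrized one. -/
lemma norm_centered_rpow_le (X : Matrix (Fin n) (Fin n) ℂ) {ρ : ℝ} (hρ : ρ ∈ Set.Ioo (0 : ℝ) 1)
    {r : ℝ} (hr : 1 ≤ r) (f : Fin n → Bool) :
    ‖gram X f - (ρ : ℂ) • (X * Xᴴ)‖ ^ r ≤
      ∑ g : Fin n → Bool, bw ρ g * ‖gram X f - gram X g‖ ^ r := by
  have h1 : gram X f - (ρ : ℂ) • (X * Xᴴ) =
      ∑ g : Fin n → Bool, ((bw ρ g : ℝ) : ℂ) • (gram X f - gram X g) := by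
    simp only [smul_sub, Finset.sum_sub_distrib]
    rw [sum_bw_smul_gram, ← Finset.sum_smul, ← Complex.ofReal_sum, sum_bw, Complex.ofReal_one,
      one_smul]
  have h2 : ‖gram X f - (ρ : ℂ) • (X * Xᴴ)‖ ≤
      ∑ g : Fin n → Bool, bw ρ g * ‖gram X f - gram X g‖ := by
    rw [h1]
    refine (norm_sum_le _ _).trans_eq (Finset.sum_congr rfl fun g _ => ?_)
    rw [norm_smul, Complex.norm_real, Real.norm_of_nonneg (bw_nonneg hρ g)]
  exact (Real.rpow_le_rpow (norm_nonneg _) h2 (by linarith)).trans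
    (Real.rpow_arith_mean_le_arith_mean_rpow _ _ _ (fun g _ => bw_nonneg hρ g) (sum_bw ρ)
      (fun g _ => norm_nonneg _) hr)

/-- Exchanges the coordinates of `f` and `g` at the places where `e` is negative. -/
def swapAt (e : Fin n → Bool) (z : (Fin n → Bool) × (Fin n → Bool)) :
    (Fin n → Bool) × (Fin n → Bool) :=
  (fun i => bif e i then z.1 i else z.2 i, fun i => bif e i then z.2 i else z.1 i)

lemma swapAt_involutive (e : Fin n → Bool) : Function.Involutive (swapAt e) := by
  rintro ⟨f, g⟩
  unfold swapAt
  ext i <;> cases h : e i <;> simp [h]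

lemma bw_swapAt (ρ : ℝ) (e : Fin n → Bool) (z : (Fin n → Bool) × (Fin n → Bool)) :
    bw ρ (swapAt e z).1 * bw ρ (swapAt e z).2 = bw ρ z.1 * bw ρ z.2 := by
  unfold bw swapAt
  rw [← Finset.prod_mul_distrib, ← Finset.prod_mul_distrib]
  refine Finset.prod_congr rfl fun i _ => ?_
  cases h : e i
  · simp only [h, cond_false, mul_comm]
  · simp only [h, cond_true]

lemma rad_mul_bernM (X : Matrix (Fin n) (Fin n) ℂ) (e f : Fin n → Bool) :
    rad (X * bernM f) e = X * (signM e * bernM f) * Xᴴ := by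
  have h : bernM f * signM e * bernM f = signM e * bernM f := by
    unfold bernM signM
    rw [diagonal_mul_diagonal, diagonal_mul_diagonal, diagonal_mul_diagonal]
    congr 1
    ext i
    split_ifs <;> simp
  unfold rad
  rw [conjTranspose_mul, bernM_conjTranspose, ← h]
  simp only [Matrix.mul_assoc]

lemma gram_sub_swapAt (X : Matrix (Fin n) (Fin n) ℂ) (e : Fin n → Bool)
    (z : (Fin n → Bool) × (Fin n → Bool)) :
    gram X (swapAt e z).1 - gram X (swapAt e z).2 =
      rad (X * bernM z.1) e - rad (X * bernM z.2) e := by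
  rw [rad_mul_bernM, rad_mul_bernM]
  unfold gram
  rw [← sub_mul, ← mul_sub, ← sub_mul, ← mul_sub]
  congr 2
  unfold bernM signM swapAt
  rw [diagonal_mul_diagonal, diagonal_mul_diagonal, diagonal_sub, diagonal_sub]
  congr 1
  ext i
  cases h : e i
  · simp only [h, cond_false]
    split_ifs <;> simp_all
  · simp [h]

/-- Convexity of `t ↦ t ^ r`; this is where the symmetrization factor `2` comes from. -/
lemma norm_sub_rpow_le {E : Type*} [SeminormedAddCommGroup E] (a b : E) {r : ℝ} (hr : 1 ≤ r) :
    ‖a - b‖ ^ r ≤ 2 ^ r * (1 / 2 * ‖a‖ ^ r + 1 / 2 * ‖b‖ ^ r) := by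
  have h := (convexOn_rpow hr).2 (Set.mem_Ici.2 (norm_nonneg a)) (Set.mem_Ici.2 (norm_nonneg b))
    (show (0 : ℝ) ≤ 1 / 2 by norm_num) (show (0 : ℝ) ≤ 1 / 2 by norm_num) (by norm_num)
  simp only [smul_eq_mul] at h
  calc ‖a - b‖ ^ r ≤ (2 * (1 / 2 * ‖a‖ + 1 / 2 * ‖b‖)) ^ r := by
        refine Real.rpow_le_rpow (norm_nonneg _) ((norm_sub_le a b).trans_eq (by ring))
          (by linarith)
    _ = 2 ^ r * (1 / 2 * ‖a‖ + 1 / 2 * ‖b‖) ^ r := Real.mul_rpow (by norm_num) (by positivity)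
    _ ≤ _ := by gcongr

/-- Symmetrization, for one fixed sign vector `e`. Swapping the two independent copies where `e` is
negative preserves the joint law and turns their difference into a difference of sign series; the
triangle inequality then separates the copies. -/
lemma symmetrization (X : Matrix (Fin n) (Fin n) ℂ) {ρ : ℝ} (hρ : ρ ∈ Set.Ioo (0 : ℝ) 1)
    {r : ℝ} (hr : 1 ≤ r) (e : Fin n → Bool) :
    ∑ f : Fin n → Bool, bw ρ f * ‖gram X f - (ρ : ℂ) • (X * Xᴴ)‖ ^ r ≤
      2 ^ r * ∑ f : Fin n → Bool, bw ρ f * ‖rad (X * bernM f) e‖ ^ r := by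
  set N : (Fin n → Bool) → ℝ := fun f => ‖rad (X * bernM f) e‖ ^ r
  calc ∑ f : Fin n → Bool, bw ρ f * ‖gram X f - (ρ : ℂ) • (X * Xᴴ)‖ ^ r
      ≤ ∑ f : Fin n → Bool, bw ρ f *
          ∑ g : Fin n → Bool, bw ρ g * ‖gram X f - gram X g‖ ^ r := by
        gcongr with f
        · exact bw_nonneg hρ f
        · exact norm_centered_rpow_le X hρ hr f
    _ = ∑ z : (Fin n → Bool) × (Fin n → Bool),
          bw ρ z.1 * bw ρ z.2 * ‖gram X z.1 - gram X z.2‖ ^ r := by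
        rw [Fintype.sum_prod_type]
        refine Finset.sum_congr rfl fun f _ => ?_
        rw [Finset.mul_sum]
        exact Finset.sum_congr rfl fun g _ => by ring
    _ = ∑ z : (Fin n → Bool) × (Fin n → Bool), bw ρ z.1 * bw ρ z.2 *
          ‖rad (X * bernM z.1) e - rad (X * bernM z.2) e‖ ^ r := by
        rw [← Equiv.sum_comp (swapAt_involutive e).toPerm]
        refine Finset.sum_congr rfl fun z _ => ?_
        rw [Function.Involutive.coe_toPerm, bw_swapAt, gram_sub_swapAt]
    _ ≤ ∑ z : (Fin n → Bool) × (Fin n → Bool), bw ρ z.1 * bw ρ z.2 *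
          (2 ^ r * (1 / 2 * N z.1 + 1 / 2 * N z.2)) := by
        gcongr with z
        · exact mul_nonneg (bw_nonneg hρ _) (bw_nonneg hρ _)
        · exact norm_sub_rpow_le _ _ hr
    _ = 2 ^ r * (1 / 2 * ((∑ f, bw ρ f * N f) * ∑ g : Fin n → Bool, bw ρ g) +
          1 / 2 * ((∑ f : Fin n → Bool, bw ρ f) * ∑ g, bw ρ g * N g)) := by
        rw [Finset.sum_mul_sum, Finset.sum_mul_sum, Fintype.sum_prod_type, Finset.mul_sum,
          Finset.mul_sum, ← Finset.sum_add_distrib, Finset.mul_sum]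
        refine Finset.sum_congr rfl fun f _ => ?_
        rw [Finset.mul_sum, Finset.mul_sum, ← Finset.sum_add_distrib, Finset.mul_sum]
        exact Finset.sum_congr rfl fun g _ => by ring
    _ = _ := by
        rw [sum_bw]
        ring

/-- Averaging `symmetrization` over `e` makes Rudelson's lemma applicable to `X R` for each outcome of
the selectors. -/
lemma centered_moment_le (X : Matrix (Fin n) (Fin n) ℂ) {ρ : ℝ} (hρ : ρ ∈ Set.Ioo (0 : ℝ) 1)
    {r : ℝ} (hr1 : 1 ≤ r) (hr : Real.log n ≤ r) :
    ∑ f : Fin n → Bool, bw ρ f * ‖gram X f - (ρ : ℂ) • (X * Xᴴ)‖ ^ r ≤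
      2 ^ r * ∑ f : Fin n → Bool, bw ρ f *
        (Real.sqrt (9 / 2 * r) * (colNorm (X * bernM f) * ‖X * bernM f‖)) ^ r := by
  set L := ∑ f : Fin n → Bool, bw ρ f * ‖gram X f - (ρ : ℂ) • (X * Xᴴ)‖ ^ r
  calc L = ∑ e : Fin n → Bool, (1 / 2 ^ n : ℝ) * L := by simp
    _ ≤ ∑ e : Fin n → Bool, (1 / 2 ^ n : ℝ) *
          (2 ^ r * ∑ f : Fin n → Bool, bw ρ f * ‖rad (X * bernM f) e‖ ^ r) := by
        gcongr with e
        exact symmetrization X hρ hr1 e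
    _ = 2 ^ r * ∑ f : Fin n → Bool, bw ρ f *
          ∑ e : Fin n → Bool, (1 / 2 ^ n : ℝ) * ‖rad (X * bernM f) e‖ ^ r := by
        simp only [Finset.mul_sum]
        rw [Finset.sum_comm]
        exact Finset.sum_congr rfl fun f _ => Finset.sum_congr rfl fun e _ => by ring
    _ ≤ _ := by
        gcongr with f
        · exact bw_nonneg hρ f
        · exact rudelson _ hr1 hr

/-! ### Moment inequalities and the quadratic inequality -/

/-- Minkowski's inequality in `L^r` of a probability weight, against a constant. -/
lemma weighted_minkowski_const {ι : Type*} [Fintype ι] (w a : ι → ℝ) (hw : ∀ i, 0 ≤ w i)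
    (hw1 : ∑ i, w i = 1) (ha : ∀ i, 0 ≤ a i) {c : ℝ} (hc : 0 ≤ c) {r : ℝ} (hr : 1 ≤ r) :
    (∑ i, w i * (a i + c) ^ r) ^ (1 / r) ≤ (∑ i, w i * a i ^ r) ^ (1 / r) + c := by
  have hr0 : r ≠ 0 := by linarith
  -- the weights are absorbed into the functions as the factor `w i ^ (1 / r)`
  have key : ∀ b : ℝ, 0 ≤ b → ∀ i, (w i ^ (1 / r) * b) ^ r = w i * b ^ r := fun b hb i => by
    rw [Real.mul_rpow (Real.rpow_nonneg (hw i) _) hb, ← Real.rpow_mul (hw i),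
      one_div_mul_cancel hr0, Real.rpow_one]
  have h := Real.Lp_add_le_of_nonneg (s := Finset.univ) (f := fun i => w i ^ (1 / r) * a i)
    (g := fun i => w i ^ (1 / r) * c) hr
    (fun i _ => mul_nonneg (Real.rpow_nonneg (hw i) _) (ha i))
    (fun i _ => mul_nonneg (Real.rpow_nonneg (hw i) _) hc)
  simp only [← mul_add] at h
  have e1 : ∀ i, (w i ^ (1 / r) * (a i + c)) ^ r = w i * (a i + c) ^ r :=
    fun i => key _ (add_nonneg (ha i) hc) i
  have e2 : ∀ i, (w i ^ (1 / r) * a i) ^ r = w i * a i ^ r := fun i => key _ (ha i) i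
  simp only [e1, e2, key c hc] at h
  rwa [← Finset.sum_mul, hw1, one_mul, ← Real.rpow_mul hc, mul_one_div_cancel hr0,
    Real.rpow_one] at h

lemma weighted_cauchy_schwarz {ι : Type*} [Fintype ι] (w a b : ι → ℝ) (hw : ∀ i, 0 ≤ w i)
    (ha : ∀ i, 0 ≤ a i) (hb : ∀ i, 0 ≤ b i) (p : ℝ) :
    ∑ i, w i * (a i * b i) ^ (p / 2) ≤
      Real.sqrt (∑ i, w i * a i ^ p) * Real.sqrt (∑ i, w i * b i ^ p) := by
  have hs : ∀ x : ℝ, 0 ≤ x → Real.sqrt (x ^ p) = x ^ (p / 2) := fun x hx => by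
    rw [Real.sqrt_eq_rpow, ← Real.rpow_mul hx]
    ring_nf
  refine le_trans (le_of_eq ?_) (Real.sum_sqrt_mul_sqrt_le Finset.univ
    (f := fun i => w i * a i ^ p) (g := fun i => w i * b i ^ p)
    (fun i => mul_nonneg (hw i) (Real.rpow_nonneg (ha i) _))
    (fun i => mul_nonneg (hw i) (Real.rpow_nonneg (hb i) _)))
  refine Finset.sum_congr rfl fun i _ => ?_
  rw [Real.sqrt_mul (hw i), Real.sqrt_mul (hw i), hs _ (ha i), hs _ (hb i),
    Real.mul_rpow (ha i) (hb i)]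
  linear_combination (-(a i ^ (p / 2) * b i ^ (p / 2))) * Real.mul_self_sqrt (hw i)

/-- Solves the quadratic inequality: `E > b + s` would give `E² - b E = E (E - b) > s²`. -/
lemma le_add_of_sq_le {E b s : ℝ} (hb : 0 ≤ b) (hs : 0 ≤ s)
    (h : E ^ 2 ≤ b * E + s ^ 2) : E ≤ b + s := by
  by_contra! hlt
  nlinarith

/-- Exponent bookkeeping: takes the root of order `p / 2` of a Cauchy–Schwarz estimate. -/
lemma rpow_sqrt_bound {p A B C K : ℝ} (hp : 0 < p) (hA : 0 ≤ A) (hB : 0 ≤ B) (hC : 0 ≤ C)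
    (hK : 0 ≤ K) (h : C ≤ K ^ (p / 2) * (Real.sqrt B * Real.sqrt A)) :
    C ^ (1 / (p / 2)) ≤ K * B ^ (1 / p) * A ^ (1 / p) := by
  have hexp : ∀ x : ℝ, 0 ≤ x → (Real.sqrt x) ^ (1 / (p / 2)) = x ^ (1 / p) := fun x hx => by
    rw [Real.sqrt_eq_rpow, ← Real.rpow_mul hx]
    congr 1
    field_simp
  have hp2 : p / 2 ≠ 0 := by positivity
  refine (Real.rpow_le_rpow hC h (by positivity)).trans_eq ?_
  rw [Real.mul_rpow (by positivity) (by positivity),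
    Real.mul_rpow (Real.sqrt_nonneg _) (Real.sqrt_nonneg _), hexp A hA, hexp B hB,
    ← Real.rpow_mul hK, mul_one_div_cancel hp2, Real.rpow_one, mul_assoc]

/-- Splits off the mean `ρ X Xᴴ` of the Gram matrix. -/
lemma rpow_center_le (X : Matrix (Fin n) (Fin n) ℂ) {ρ : ℝ} (hρ : ρ ∈ Set.Ioo (0 : ℝ) 1)
    {r : ℝ} (hr1 : 1 ≤ r) :
    (∑ f : Fin n → Bool, bw ρ f * ‖gram X f‖ ^ r) ^ (1 / r) ≤
      (∑ f : Fin n → Bool, bw ρ f * ‖gram X f - (ρ : ℂ) • (X * Xᴴ)‖ ^ r) ^ (1 / r)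
        + ρ * ‖X‖ ^ 2 := by
  have hw := fun f : Fin n → Bool => bw_nonneg hρ f
  have hXX : ‖(ρ : ℂ) • (X * Xᴴ)‖ ≤ ρ * ‖X‖ ^ 2 := by
    rw [norm_smul, Complex.norm_real, Real.norm_of_nonneg hρ.1.le, sq]
    have h := Matrix.l2_opNorm_mul X Xᴴ
    rw [Matrix.l2_opNorm_conjTranspose] at h
    exact mul_le_mul_of_nonneg_left h hρ.1.le
  refine le_trans ?_ (weighted_minkowski_const (fun f : Fin n → Bool => bw ρ f) _ hw (sum_bw ρ)
    (fun f => norm_nonneg (gram X f - (ρ : ℂ) • (X * Xᴴ)))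
    (mul_nonneg hρ.1.le (sq_nonneg ‖X‖)) hr1)
  refine Real.rpow_le_rpow (Finset.sum_nonneg fun f _ => mul_nonneg (hw f) (by positivity)) ?_
    (by positivity)
  refine Finset.sum_le_sum fun f _ => mul_le_mul_of_nonneg_left ?_ (hw f)
  refine Real.rpow_le_rpow (norm_nonneg _) ?_ (by linarith)
  calc ‖gram X f‖ = ‖(gram X f - (ρ : ℂ) • (X * Xᴴ)) + (ρ : ℂ) • (X * Xᴴ)‖ := by
        rw [sub_add_cancel]
    _ ≤ _ := (norm_add_le _ _).trans (by gcongr)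

/-- Symmetrization, Rudelson's lemma and Cauchy–Schwarz combined, with `r = p / 2`; the constants
multiply to `2 √(9 p / 4) = 3 √p`. -/
lemma centered_moment_le_sqrt (X : Matrix (Fin n) (Fin n) ℂ) {ρ : ℝ}
    (hρ : ρ ∈ Set.Ioo (0 : ℝ) 1) {p : ℝ} (hp1 : 2 * Real.log n ≤ p) (hp2 : 2 ≤ p) :
    ∑ f : Fin n → Bool, bw ρ f * ‖gram X f - (ρ : ℂ) • (X * Xᴴ)‖ ^ (p / 2) ≤
      (3 * Real.sqrt p) ^ (p / 2) *
        (Real.sqrt (∑ f : Fin n → Bool, bw ρ f * colNorm (X * bernM f) ^ p) *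
          Real.sqrt (∑ f : Fin n → Bool, bw ρ f * ‖X * bernM f‖ ^ p)) := by
  have hc := fun f : Fin n → Bool => colNorm_nonneg (X * bernM f)
  have hK : 0 ≤ Real.sqrt (9 / 2 * (p / 2)) := Real.sqrt_nonneg _
  have h2K : 2 * Real.sqrt (9 / 2 * (p / 2)) = 3 * Real.sqrt p := by
    rw [show 9 / 2 * (p / 2) = (3 / 2) ^ 2 * p by ring, Real.sqrt_mul (by positivity),
      Real.sqrt_sq (by norm_num)]
    ring
  refine (centered_moment_le X hρ (by linarith) (by linarith)).trans ?_
  have hsum : ∑ f : Fin n → Bool, bw ρ f * (Real.sqrt (9 / 2 * (p / 2)) *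
        (colNorm (X * bernM f) * ‖X * bernM f‖)) ^ (p / 2) =
      Real.sqrt (9 / 2 * (p / 2)) ^ (p / 2) * ∑ f : Fin n → Bool, bw ρ f *
        (colNorm (X * bernM f) * ‖X * bernM f‖) ^ (p / 2) := by
    rw [Finset.mul_sum]
    refine Finset.sum_congr rfl fun f _ => ?_
    rw [Real.mul_rpow hK (mul_nonneg (hc f) (norm_nonneg _))]
    ring
  rw [hsum, ← mul_assoc, ← Real.mul_rpow zero_le_two hK, h2K]
  refine mul_le_mul_of_nonneg_left ?_ (by positivity)
  exact weighted_cauchy_schwarz _ _ _ (fun f => bw_nonneg hρ f) hc (fun f => norm_nonneg _) p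

end MatrixFacts

end RandomRestriction

open RandomRestriction in
open scoped Matrix.Norms.L2Operator Matrix in
/-- Rudelson–Vershynin: norm of a random column restriction. -/
theorem random_restriction (n : ℕ) (X : Matrix (Fin n) (Fin n) ℂ) (ρ : ℝ)
    (hρ : ρ ∈ Set.Ioo (0:ℝ) 1) (p : ℝ) (hp1 : 2 * Real.log n ≤ p) (hp2 : 2 ≤ p) :
    (∑ f : Fin n → Bool, bw ρ f * specNorm (X * bernM f) ^ p) ^ (1/p)
      ≤ 3 * Real.sqrt p *
          (∑ f : Fin n → Bool, bw ρ f * colNorm (X * bernM f) ^ p) ^ (1/p)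
        + Real.sqrt ρ * specNorm X := by
  simp only [specNorm_eq_norm]
  have hw := fun f : Fin n → Bool => bw_nonneg hρ f
  have hc := fun f : Fin n → Bool => colNorm_nonneg (X * bernM f)
  have hp0 : 0 < p := by linarith
  have hr1 : 1 ≤ p / 2 := by linarith
  set A := ∑ f : Fin n → Bool, bw ρ f * ‖X * bernM f‖ ^ p
  set B := ∑ f : Fin n → Bool, bw ρ f * colNorm (X * bernM f) ^ p
  have hA0 : 0 ≤ A := Finset.sum_nonneg fun f _ => mul_nonneg (hw f) (by positivity)
  have hB0 : 0 ≤ B := Finset.sum_nonneg fun f _ => mul_nonneg (hw f) (Real.rpow_nonneg (hc f) _)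
  set C := ∑ f : Fin n → Bool, bw ρ f * ‖gram X f - (ρ : ℂ) • (X * Xᴴ)‖ ^ (p / 2)
  have hC0 : 0 ≤ C := Finset.sum_nonneg fun f _ => mul_nonneg (hw f) (by positivity)
  have hsq : (A ^ (1 / p)) ^ 2 = A ^ (1 / (p / 2)) := by
    rw [← Real.rpow_natCast, ← Real.rpow_mul hA0]
    congr 1
    push_cast
    field_simp
  have hgram : A = ∑ f : Fin n → Bool, bw ρ f * ‖gram X f‖ ^ (p / 2) := by
    refine Finset.sum_congr rfl fun f _ => ?_
    rw [norm_gram, ← Real.rpow_natCast, ← Real.rpow_mul (norm_nonneg _)]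
    congr 2
    push_cast
    ring
  have hcenter : A ^ (1 / (p / 2)) ≤ C ^ (1 / (p / 2)) + ρ * ‖X‖ ^ 2 := by
    rw [hgram]
    exact rpow_center_le X hρ hr1
  have hCle : C ^ (1 / (p / 2)) ≤ 3 * Real.sqrt p * B ^ (1 / p) * A ^ (1 / p) :=
    rpow_sqrt_bound hp0 hA0 hB0 hC0 (by positivity) (centered_moment_le_sqrt X hρ hp1 hp2)
  refine le_add_of_sq_le
    (mul_nonneg (by positivity) (Real.rpow_nonneg hB0 _)) (by positivity) ?_
  rw [hsq, mul_pow, Real.sq_sqrt hρ.1.le]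
  exact hcenter.trans (by gcongr)
end
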